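/- arXiv:quant-ph/0408115 — 13 statements merged into one kernel-verified Lean document; each statement's English description precedes it below -/
import Mathlib

section
/- A POVM P with finite outcome set E on ℂ^d is extremal if and only if the only family D : E → M_d(ℂ) of Hermitian matrices satisfying ∑_{e∈E} D_e = 0 and range(D_e) ⊆ range(P_e) for every e ∈ E is the zero family. -/
/-!
Both directions rest on one equivalence: for `P ≥ 0` and `D` Hermitian, `range D ≤ range P` holds
exactly when `P` can be moved a little in both directions `±D` without leaving the positive
semidefinite cone.

If `range D ≤ range P`, write `P = Bᴴ B`. Then `D = Bᴴ N B` with `N` Hermitian, hence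
`-‖N‖ P ≤ D ≤ ‖N‖ P` (`exists_smul_add_sub_posSemidef`). So a nonzero family `D` as in the theorem
exhibits `P` as the midpoint of the two POVMs `P ± c⁻¹ D` with `c` large.

Conversely, if `P = a Q + b R` is a proper convex combination of POVMs, then `ker P_e ≤ ker Q_e` by
positivity, so the Hermitian family `D = Q - P` has `ker P_e ≤ ker D_e`, which for Hermitian
matrices means `range D_e ≤ range P_e`; thus `D = 0` and `Q = P`.
-/

open Matrix
open scoped ComplexOrder

/-- A POVM with finite outcome set `E` on `ℂ^d`: a family of positive semidefinite
matrices summing to the identity. -/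
def IsPOVM {d : ℕ} {E : Type*} [Fintype E] (P : E → Matrix (Fin d) (Fin d) ℂ) : Prop :=
  (∀ e, (P e).PosSemidef) ∧ ∑ e, P e = 1

/-- A POVM is extremal if it is an extreme point of the convex set of POVMs
inside the real vector space of families `E → M_d(ℂ)`. -/
def IsExtremalPOVM {d : ℕ} {E : Type*} [Fintype E] (P : E → Matrix (Fin d) (Fin d) ℂ) : Prop :=
  P ∈ Set.extremePoints ℝ {Q : E → Matrix (Fin d) (Fin d) ℂ | IsPOVM Q}

section Aux

variable {d : ℕ}

lemma exists_eq_mul_of_ker_le (A C : Matrix (Fin d) (Fin d) ℂ)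
    (h : ∀ x, A *ᵥ x = 0 → C *ᵥ x = 0) : ∃ Z : Matrix (Fin d) (Fin d) ℂ, C = Z * A := by
  have hk : LinearMap.ker A.mulVecLin ≤ LinearMap.ker C.mulVecLin := fun x hx => h x hx
  -- `A x ↦ C x` is well defined on `range A`; extend it linearly to the whole space.
  obtain ⟨g, hg⟩ := LinearMap.exists_extend
    (((LinearMap.ker A.mulVecLin).liftQ C.mulVecLin hk).comp
      A.mulVecLin.quotKerEquivRange.symm.toLinearMap)
  refine ⟨LinearMap.toMatrix' g, ?_⟩
  apply Matrix.toLin'.injective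
  rw [Matrix.toLin'_mul, Matrix.toLin'_toMatrix']
  ext1 i
  ext1
  have := LinearMap.congr_fun hg (A.mulVecLin.rangeRestrict (Pi.single i 1))
  have h2 : A.mulVecLin.quotKerEquivRange.symm (A.mulVecLin.rangeRestrict (Pi.single i 1)) =
      Submodule.Quotient.mk (Pi.single i 1) := by
    rw [LinearEquiv.symm_apply_eq]
    rfl
  simp only [LinearMap.comp_apply, LinearEquiv.coe_coe, h2] at this
  exact this.symm

lemma exists_eq_mul_of_range_le (A C : Matrix (Fin d) (Fin d) ℂ)
    (h : LinearMap.range C.mulVecLin ≤ LinearMap.range A.mulVecLin) :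
    ∃ X : Matrix (Fin d) (Fin d) ℂ, C = A * X := by
  have hx : ∀ j, ∃ w, A *ᵥ w = C *ᵥ Pi.single j 1 := fun j => h ⟨Pi.single j 1, rfl⟩
  choose w hw using hx
  refine ⟨Matrix.of fun i j => w j i, ?_⟩
  ext i j
  have := congrFun (hw j) i
  simp only [Matrix.mulVec_single_one, Matrix.col_apply] at this
  rw [← this]
  rfl

lemma range_le_of_ker_le {A C : Matrix (Fin d) (Fin d) ℂ} (hA : A.IsHermitian)
    (hC : C.IsHermitian) (h : ∀ x, A *ᵥ x = 0 → C *ᵥ x = 0) :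
    LinearMap.range C.mulVecLin ≤ LinearMap.range A.mulVecLin := by
  obtain ⟨Z, hZ⟩ := exists_eq_mul_of_ker_le A C h
  have hCZ : C = A * Zᴴ := by
    rw [← hC.eq, hZ, Matrix.conjTranspose_mul, hA.eq]
  rw [hCZ, Matrix.mulVecLin_mul]
  exact LinearMap.range_comp_le_range _ _

/-- Range inclusion gives `D = Bᴴ B X`; Hermiticity of `D` lets `B X` be rewritten as `Z B`, and
the Hermitian part of `Z` serves as `N`. -/
lemma exists_hermitian_factor {B D : Matrix (Fin d) (Fin d) ℂ} (hD : D.IsHermitian)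
    (h : LinearMap.range D.mulVecLin ≤ LinearMap.range (Bᴴ * B).mulVecLin) :
    ∃ N : Matrix (Fin d) (Fin d) ℂ, N.IsHermitian ∧ D = Bᴴ * N * B := by
  obtain ⟨X, hX⟩ := exists_eq_mul_of_range_le _ _ h
  have hX' : D = Xᴴ * (Bᴴ * B) := by
    conv_lhs => rw [← hD.eq, hX]
    simp [Matrix.conjTranspose_mul]
  -- `B x = 0` gives `Bᴴ B X x = D x = Xᴴ Bᴴ B x = 0`, hence `B X x = 0`.
  obtain ⟨Z, hZ⟩ := exists_eq_mul_of_ker_le B (B * X) (by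
    intro x hx
    have h0 : D *ᵥ x = 0 := by
      rw [hX', ← Matrix.mul_assoc, ← Matrix.mulVec_mulVec, hx, Matrix.mulVec_zero]
    rw [hX, ← Matrix.mulVec_mulVec, Matrix.conjTranspose_mul_self_mulVec_eq_zero] at h0
    rw [← Matrix.mulVec_mulVec, h0])
  have hDZ : D = Bᴴ * Z * B := by rw [hX, Matrix.mul_assoc, hZ, Matrix.mul_assoc]
  have hDZ' : D = Bᴴ * Zᴴ * B := by
    conv_lhs => rw [← hD.eq, hDZ]
    simp [Matrix.conjTranspose_mul, Matrix.mul_assoc]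
  refine ⟨(2⁻¹ : ℝ) • (Z + Zᴴ), ?_, ?_⟩
  · simp [Matrix.IsHermitian, Matrix.conjTranspose_smul, add_comm]
  · rw [Matrix.mul_smul, Matrix.smul_mul, Matrix.mul_add, Matrix.add_mul, ← hDZ, ← hDZ',
      ← two_smul ℝ D, smul_smul]
    norm_num

open scoped MatrixOrder Matrix.Norms.L2Operator in
lemma exists_smul_one_add_sub_posSemidef {N : Matrix (Fin d) (Fin d) ℂ} (hN : N.IsHermitian) :
    ∃ c : ℝ, 0 ≤ c ∧ (c • (1 : Matrix (Fin d) (Fin d) ℂ) + N).PosSemidef ∧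
      (c • (1 : Matrix (Fin d) (Fin d) ℂ) - N).PosSemidef := by
  have hs : IsSelfAdjoint N := hN
  refine ⟨‖N‖, norm_nonneg _, ?_, ?_⟩
  · have := hs.neg_algebraMap_norm_le_self
    rw [Matrix.le_iff, Algebra.algebraMap_eq_smul_one, sub_neg_eq_add, add_comm] at this
    exact this
  · have := hs.le_algebraMap_norm_self
    rw [Matrix.le_iff, Algebra.algebraMap_eq_smul_one] at this
    exact this

lemma exists_smul_add_sub_posSemidef {P D : Matrix (Fin d) (Fin d) ℂ} (hP : P.PosSemidef)
    (hD : D.IsHermitian)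
    (h : LinearMap.range D.mulVecLin ≤ LinearMap.range P.mulVecLin) :
    ∃ c : ℝ, 0 ≤ c ∧ (c • P + D).PosSemidef ∧ (c • P - D).PosSemidef := by
  obtain ⟨B, rfl⟩ : ∃ B : Matrix (Fin d) (Fin d) ℂ, P = Bᴴ * B := by
    open scoped MatrixOrder in
    exact CStarAlgebra.nonneg_iff_eq_star_mul_self.mp hP.nonneg
  obtain ⟨N, hN, rfl⟩ := exists_hermitian_factor hD h
  obtain ⟨c, hc, h1, h2⟩ := exists_smul_one_add_sub_posSemidef hN
  refine ⟨c, hc, ?_, ?_⟩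
  · convert h1.conjTranspose_mul_mul_same B using 1
    simp [Matrix.mul_add, Matrix.add_mul]
  · convert h2.conjTranspose_mul_mul_same B using 1
    simp [Matrix.mul_sub, Matrix.sub_mul]

lemma posSemidef_real_smul {A : Matrix (Fin d) (Fin d) ℂ} (hA : A.PosSemidef) {c : ℝ}
    (hc : 0 ≤ c) : (c • A).PosSemidef := by
  have := hA.smul (Complex.zero_le_real.mpr hc)
  convert this using 1
  ext i j
  simp

lemma mulVec_eq_zero_of_convex_comb {P Q R : Matrix (Fin d) (Fin d) ℂ} (hQ : Q.PosSemidef)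
    (hR : R.PosSemidef) {a b : ℝ} (ha : 0 < a) (hb : 0 < b) (h : a • Q + b • R = P)
    (x : Fin d → ℂ) (hx : P *ᵥ x = 0) : Q *ᵥ x = 0 := by
  have hQa := posSemidef_real_smul hQ ha.le
  have hRb := posSemidef_real_smul hR hb.le
  have h0 : star x ⬝ᵥ ((a • Q) *ᵥ x) + star x ⬝ᵥ ((b • R) *ᵥ x) = 0 := by
    rw [← dotProduct_add, ← Matrix.add_mulVec, h, hx, dotProduct_zero]
  have h1 := (add_eq_zero_iff_of_nonneg (hQa.dotProduct_mulVec_nonneg x)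
    (hRb.dotProduct_mulVec_nonneg x)).mp h0
  have h2 := (hQa.dotProduct_mulVec_zero_iff x).mp h1.1
  rw [Matrix.smul_mulVec] at h2
  exact (smul_eq_zero.mp h2).resolve_left ha.ne'

end Aux

theorem stmt2 {d : ℕ} (hd : 1 ≤ d) {E : Type*} [Fintype E]
    (P : E → Matrix (Fin d) (Fin d) ℂ) (hP : IsPOVM P) :
    IsExtremalPOVM P ↔
      ∀ D : E → Matrix (Fin d) (Fin d) ℂ,
        (∀ e, (D e).IsHermitian) → (∑ e, D e = 0) →
        (∀ e, LinearMap.range (D e).mulVecLin ≤ LinearMap.range (P e).mulVecLin) →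
        D = 0 := by
  constructor
  · intro hext D hD hsum hrange
    choose c hc h1 h2 using fun e => exists_smul_add_sub_posSemidef (hP.1 e) (hD e) (hrange e)
    -- A constant that works for all outcomes; the summand `1` keeps it positive.
    set C : ℝ := 1 + ∑ e, c e with hC
    have hCpos : 0 < C := by
      have := Finset.sum_nonneg fun e (_ : e ∈ Finset.univ) => hc e
      linarith
    have hcC : ∀ e, 0 ≤ C - c e := fun e => by
      have := Finset.single_le_sum (fun e _ => hc e) (Finset.mem_univ e)
      linarith
    have hplus : IsPOVM (P + C⁻¹ • D) := by
      refine ⟨fun e => ?_, ?_⟩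
      · have := posSemidef_real_smul ((posSemidef_real_smul (hP.1 e) (hcC e)).add (h1 e))
          (inv_nonneg.mpr hCpos.le)
        convert this using 1
        rw [← add_assoc, ← add_smul, sub_add_cancel, smul_add, smul_smul,
          inv_mul_cancel₀ hCpos.ne', one_smul]
        rfl
      · simp [Finset.sum_add_distrib, ← Finset.smul_sum, hsum, hP.2]
    have hminus : IsPOVM (P - C⁻¹ • D) := by
      refine ⟨fun e => ?_, ?_⟩
      · have := posSemidef_real_smul ((posSemidef_real_smul (hP.1 e) (hcC e)).add (h2 e))
          (inv_nonneg.mpr hCpos.le)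
        convert this using 1
        rw [← add_sub_assoc, ← add_smul, sub_add_cancel, smul_sub, smul_smul,
          inv_mul_cancel₀ hCpos.ne', one_smul]
        rfl
      · simp [Finset.sum_sub_distrib, ← Finset.smul_sum, hsum, hP.2]
    have heq := (mem_extremePoints_iff_left.mp hext).2 _ hplus _ hminus
      ⟨1 / 2, 1 / 2, by norm_num, by norm_num, by norm_num, by module⟩
    rw [add_eq_left] at heq
    exact (smul_eq_zero.mp heq).resolve_left (inv_ne_zero hCpos.ne')
  · intro h
    refine mem_extremePoints_iff_left.mpr ⟨hP, fun Q hQ R hR hseg => ?_⟩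
    obtain ⟨a, b, ha, hb, -, hab⟩ := hseg
    have hD : ∀ e, ((Q - P) e).IsHermitian := fun e =>
      (hQ.1 e).isHermitian.sub (hP.1 e).isHermitian
    refine sub_eq_zero.mp (h (Q - P) hD ?_ fun e => ?_)
    · simp [Finset.sum_sub_distrib, hQ.2, hP.2]
    · refine range_le_of_ker_le (hP.1 e).isHermitian (hD e) fun x hx => ?_
      have hQx := mulVec_eq_zero_of_convex_comb (hQ.1 e) (hR.1 e) ha hb (congrFun hab e) x hx
      rw [Pi.sub_apply, Matrix.sub_mulVec, hQx, hx, sub_zero]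
end

section
/- Let P be a POVM with finite outcome set E on ℂ^d, and for each e ∈ E let (v^{(e)}_n)_{n=1,…,r_e}, with r_e = rank(P_e), be an orthonormal family of eigenvectors of P_e corresponding to its nonzero eigenvalues (hence an orthonormal basis of range(P_e)). Then P is extremal if and only if the rank-one matrices v^{(e)}_n (v^{(e)}_m)^†, for e ∈ E and 1 ≤ n, m ≤ r_e, are linearly independent over ℂ in M_d(ℂ). -/
/-!
Let `V e` be the isometry with columns `v e n`. Its range is the range of `P e`, and the matrices
`v e n (v e m)†` span the corner `{V e * C * (V e)ᴴ}`, so linear independence says that a family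
`C e` with `∑ e, V e * C e * (V e)ᴴ = 0` vanishes.

If this holds and `P` is a proper convex combination of POVMs, one of them being `Q`, then
`ker (P e) ≤ ker (Q e)` by positivity (`mul_eq_zero_of_convex_comb`), so `Q e - P e` lies in the
corner of `V e`. These differences sum to zero, hence `Q = P`.

Conversely, a relation `∑ e, V e * C e * (V e)ᴴ = 0` with all `C e` Hermitian gives two POVMs
`P e ± ε • V e * C e * (V e)ᴴ` for small `ε > 0`, because `P e` is strictly positive on its own range
(`eventually_perturb_posSemidef`). Their midpoint is `P`, so extremality forces `C = 0`. A general
relation reduces to the Hermitian case by taking the parts `C + Cᴴ` and `I • (C - Cᴴ)`.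
-/

open Matrix
open scoped ComplexOrder

/-- An isometry `V` whose columns are `rank A` many vectors of the range of `A` has the same range
as `A`, so the projection `V * Vᴴ` fixes `A`. -/
theorem isometry_mul_conjTranspose_mul {d r : ℕ} {A : Matrix (Fin d) (Fin d) ℂ} (hr : A.rank = r)
    {V : Matrix (Fin d) (Fin r) ℂ} (hV : Vᴴ * V = 1)
    (hcol : ∀ n, Vᵀ n ∈ LinearMap.range A.mulVecLin) : V * Vᴴ * A = A := by
  have hrank : V.rank = r := by
    have h := rank_conjTranspose_mul_self V
    rw [hV, rank_one, Fintype.card_fin] at h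
    exact h.symm
  have hle : LinearMap.range V.mulVecLin ≤ LinearMap.range A.mulVecLin := by
    rw [range_mulVecLin, Submodule.span_le]
    rintro _ ⟨n, rfl⟩
    exact hcol n
  have heq : LinearMap.range V.mulVecLin = LinearMap.range A.mulVecLin :=
    Submodule.eq_of_le_of_finrank_eq hle (by
      change V.rank = A.rank
      rw [hrank, hr])
  refine ext_of_mulVec_single fun j => ?_
  have hmem : A *ᵥ Pi.single j 1 ∈ LinearMap.range V.mulVecLin := heq ▸ ⟨Pi.single j 1, rfl⟩
  obtain ⟨y, hy⟩ := hmem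
  rw [mulVecLin_apply] at hy
  rw [← mulVec_mulVec, ← hy, mulVec_mulVec, Matrix.mul_assoc, hV, Matrix.mul_one]

open scoped MatrixOrder Matrix.Norms.L2Operator in
/-- A Hermitian matrix lies between `-K` and `K` for some real `K`, namely its operator norm. -/
theorem exists_posSemidef_smul_one_add_sub {r : ℕ} {C : Matrix (Fin r) (Fin r) ℂ}
    (hC : C.IsHermitian) :
    ∃ K : ℝ, ((K : ℂ) • (1 : Matrix (Fin r) (Fin r) ℂ) + C).PosSemidef ∧
      ((K : ℂ) • (1 : Matrix (Fin r) (Fin r) ℂ) - C).PosSemidef := by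
  have e : ((‖C‖ : ℝ) : ℂ) • (1 : Matrix (Fin r) (Fin r) ℂ) = algebraMap ℝ _ ‖C‖ := by
    rw [Algebra.algebraMap_eq_smul_one]; ext i j; simp
  refine ⟨‖C‖, ?_, ?_⟩
  · have h := IsSelfAdjoint.neg_algebraMap_norm_le_self (a := C) hC
    rw [e]
    have := Matrix.le_iff.1 h
    rwa [sub_neg_eq_add, add_comm] at this
  · have h := IsSelfAdjoint.le_algebraMap_norm_self (a := C) hC
    rw [e]
    exact Matrix.le_iff.1 h

/-- The kernel of a positive combination of positive semidefinite matrices lies in the kernel of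
each of them, since `x† A x = 0` forces `A x = 0`. -/
theorem mul_eq_zero_of_convex_comb {d : ℕ} {A B Z : Matrix (Fin d) (Fin d) ℂ}
    (hA : A.PosSemidef) (hB : B.PosSemidef) {a b : ℝ} (ha : 0 < a) (hb : 0 < b)
    (h : (a • A + b • B) * Z = 0) : A * Z = 0 := by
  refine ext_of_mulVec_single fun j => ?_
  rw [zero_mulVec, ← mulVec_mulVec]
  set x := Z *ᵥ Pi.single j 1
  have hx : (a • A + b • B) *ᵥ x = 0 := by
    rw [mulVec_mulVec, h, zero_mulVec]
  have h1 : (a : ℂ) * (star x ⬝ᵥ A *ᵥ x) + (b : ℂ) * (star x ⬝ᵥ B *ᵥ x) = 0 := by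
    have := congrArg (star x ⬝ᵥ ·) hx
    simpa [add_mulVec, smul_mulVec, dotProduct_add, dotProduct_smul] using this
  have hA' := hA.dotProduct_mulVec_nonneg x
  have hB' := hB.dotProduct_mulVec_nonneg x
  have ha' : (0 : ℂ) < a := by exact_mod_cast ha
  have hb' : (0 : ℂ) < b := by exact_mod_cast hb
  have h2 := (add_eq_zero_iff_of_nonneg (mul_nonneg ha'.le hA') (mul_nonneg hb'.le hB')).1 h1
  exact (hA.dotProduct_mulVec_zero_iff x).1 ((mul_eq_zero.1 h2.1).resolve_left ha'.ne')

/-- With `D = diagonal μ` and `-K ≤ C ≤ K`, write `D ± ε C = (D - ε K) + ε (K ± C)`: both summands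
are positive semidefinite once `ε K ≤ μ n` for all `n`. -/
theorem eventually_perturb_posSemidef {d r : ℕ} {A : Matrix (Fin d) (Fin d) ℂ}
    {V : Matrix (Fin d) (Fin r) ℂ} {μ : Fin r → ℝ} (hμ : ∀ n, 0 < μ n)
    (hA : A = V * diagonal (fun n => (μ n : ℂ)) * Vᴴ)
    {C : Matrix (Fin r) (Fin r) ℂ} (hC : C.IsHermitian) :
    ∀ᶠ ε : ℝ in nhdsWithin 0 (Set.Ioi 0),
      (A + ε • (V * C * Vᴴ)).PosSemidef ∧ (A - ε • (V * C * Vᴴ)).PosSemidef := by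
  obtain ⟨K, hK1, hK2⟩ := exists_posSemidef_smul_one_add_sub hC
  have hev : ∀ᶠ ε : ℝ in nhdsWithin 0 (Set.Ioi 0), ∀ n, ε * K < μ n := by
    refine Filter.eventually_all.2 fun n => nhdsWithin_le_nhds ?_
    have hc : Continuous fun ε : ℝ => ε * K := by fun_prop
    exact hc.continuousAt.eventually_lt continuousAt_const (by simpa using hμ n)
  filter_upwards [hev, self_mem_nhdsWithin] with ε hε hpos
  have hpos' : (0 : ℂ) ≤ (ε : ℂ) := by exact_mod_cast (le_of_lt hpos)
  have hD : (diagonal fun n => ((μ n - ε * K : ℝ) : ℂ)).PosSemidef :=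
    PosSemidef.diagonal fun n => by
      have := hε n
      exact Complex.zero_le_real.2 (by linarith)
  have hDeq : (diagonal fun n => ((μ n - ε * K : ℝ) : ℂ)) =
      diagonal (fun n => (μ n : ℂ)) - (ε : ℂ) • (K : ℂ) • (1 : Matrix (Fin r) (Fin r) ℂ) := by
    ext i j
    by_cases hij : i = j
    · subst hij; simp
    · simp [hij]
  have hsm : ε • (V * C * Vᴴ) = (ε : ℂ) • (V * C * Vᴴ) := by ext i j; simp
  constructor
  · have h := (hD.add (hK1.smul hpos')).mul_mul_conjTranspose_same V
    convert h using 1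
    rw [hDeq, hA, hsm, smul_add, ← add_assoc, sub_add_cancel]
    simp [Matrix.mul_add, Matrix.add_mul]
  · have h := (hD.add (hK2.smul hpos')).mul_mul_conjTranspose_same V
    convert h using 1
    rw [hDeq, hA, hsm, smul_sub, sub_add_sub_cancel]
    simp [Matrix.mul_sub, Matrix.sub_mul]

/-- Multiplying by `Vᴴ` and `V` recovers the coefficients `C` from `V * C * Vᴴ`. -/
theorem eq_zero_of_isometry_conj {d r : ℕ} {V : Matrix (Fin d) (Fin r) ℂ} (hV : Vᴴ * V = 1)
    {C : Matrix (Fin r) (Fin r) ℂ} (h : V * C * Vᴴ = 0) : C = 0 := by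
  calc C = (Vᴴ * V) * C * (Vᴴ * V) := by rw [hV, Matrix.one_mul, Matrix.mul_one]
    _ = Vᴴ * (V * C * Vᴴ) * V := by simp only [Matrix.mul_assoc]
    _ = 0 := by rw [h, Matrix.mul_zero, Matrix.zero_mul]

/-- For an extremal POVM, a relation with Hermitian coefficient matrices is trivial: otherwise the
POVM would be the midpoint of its perturbations in the directions `± V e * C e * (V e)ᴴ`. -/
theorem hermitian_relation_trivial {d : ℕ} {E : Type*} [Fintype E]
    {P : E → Matrix (Fin d) (Fin d) ℂ} (hext : IsExtremalPOVM P) {r : E → ℕ}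
    {V : (e : E) → Matrix (Fin d) (Fin (r e)) ℂ} (hV : ∀ e, (V e)ᴴ * V e = 1)
    {μ : (e : E) → Fin (r e) → ℝ} (hμ : ∀ e n, 0 < μ e n)
    (hA : ∀ e, P e = V e * diagonal (fun n => (μ e n : ℂ)) * (V e)ᴴ)
    {C : (e : E) → Matrix (Fin (r e)) (Fin (r e)) ℂ} (hC : ∀ e, (C e).IsHermitian)
    (hsum : ∑ e, V e * C e * (V e)ᴴ = 0) (e : E) : C e = 0 := by
  have hev := Filter.eventually_all.2 fun e =>
    eventually_perturb_posSemidef (hμ e) (hA e) (hC e)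
  obtain ⟨ε, hε, hpos⟩ := (hev.and self_mem_nhdsWithin).exists
  have hpos : 0 < ε := hpos
  have hP := hext.1
  have h1 : IsPOVM fun e => P e + ε • (V e * C e * (V e)ᴴ) :=
    ⟨fun e => (hε e).1, by
      rw [Finset.sum_add_distrib, ← Finset.smul_sum, hsum, smul_zero, add_zero]; exact hP.2⟩
  have h2 : IsPOVM fun e => P e - ε • (V e * C e * (V e)ᴴ) :=
    ⟨fun e => (hε e).2, by
      rw [Finset.sum_sub_distrib, ← Finset.smul_sum, hsum, smul_zero, sub_zero]; exact hP.2⟩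
  have hmid : P ∈ openSegment ℝ (fun e => P e + ε • (V e * C e * (V e)ᴴ))
      (fun e => P e - ε • (V e * C e * (V e)ᴴ)) := by
    refine ⟨1 / 2, 1 / 2, by norm_num, by norm_num, by norm_num, ?_⟩
    funext e
    simp only [Pi.add_apply, Pi.smul_apply]
    module
  have heq := congrFun (hext.2 h1 h2 hmid) e
  have h0 : ε • (V e * C e * (V e)ᴴ) = 0 := by simpa using heq
  exact eq_zero_of_isometry_conj (hV e) ((smul_eq_zero.1 h0).resolve_left hpos.ne')

/-- The Hermitian coefficient case applied to `C + Cᴴ` and `I • (C - Cᴴ)`. -/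
theorem relation_trivial {d : ℕ} {E : Type*} [Fintype E]
    {P : E → Matrix (Fin d) (Fin d) ℂ} (hext : IsExtremalPOVM P) {r : E → ℕ}
    {V : (e : E) → Matrix (Fin d) (Fin (r e)) ℂ} (hV : ∀ e, (V e)ᴴ * V e = 1)
    {μ : (e : E) → Fin (r e) → ℝ} (hμ : ∀ e n, 0 < μ e n)
    (hA : ∀ e, P e = V e * diagonal (fun n => (μ e n : ℂ)) * (V e)ᴴ)
    {C : (e : E) → Matrix (Fin (r e)) (Fin (r e)) ℂ}
    (hsum : ∑ e, V e * C e * (V e)ᴴ = 0) (e : E) : C e = 0 := by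
  have hsum' : ∑ e, V e * (C e)ᴴ * (V e)ᴴ = 0 := by
    have := congrArg conjTranspose hsum
    simpa [conjTranspose_sum, Matrix.mul_assoc] using this
  have h1 := hermitian_relation_trivial hext hV hμ hA (C := fun e => C e + (C e)ᴴ)
    (fun e => by simp [IsHermitian, add_comm])
    (by simp [Matrix.mul_add, Matrix.add_mul, Finset.sum_add_distrib, hsum, hsum']) e
  have h2 := hermitian_relation_trivial hext hV hμ hA (C := fun e => Complex.I • (C e - (C e)ᴴ))
    (fun e => by simp [IsHermitian, ← smul_neg])
    (by simp [Matrix.mul_sub, Matrix.sub_mul, Finset.sum_sub_distrib, ← Finset.smul_sum,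
      hsum, hsum']) e
  have h3 : C e - (C e)ᴴ = 0 := (smul_eq_zero.1 h2).resolve_left Complex.I_ne_zero
  have h4 : (2 : ℂ) • C e = 0 := by
    calc (2 : ℂ) • C e = (C e + (C e)ᴴ) + (C e - (C e)ᴴ) := by module
      _ = 0 := by rw [h3]; simpa using h1
  exact (smul_eq_zero.1 h4).resolve_left two_ne_zero

theorem isExtremalPOVM_of_relation_trivial {d : ℕ} {E : Type*} [Fintype E]
    {P : E → Matrix (Fin d) (Fin d) ℂ} (hP : IsPOVM P) {r : E → ℕ}
    {V : (e : E) → Matrix (Fin d) (Fin (r e)) ℂ}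
    (hproj : ∀ e, V e * (V e)ᴴ * P e = P e)
    (htriv : ∀ C : (e : E) → Matrix (Fin (r e)) (Fin (r e)) ℂ,
      ∑ e, V e * C e * (V e)ᴴ = 0 → ∀ e, C e = 0) : IsExtremalPOVM P := by
  have hproj' : ∀ e, P e * (V e * (V e)ᴴ) = P e := fun e => by
    have := congrArg conjTranspose (hproj e)
    simpa [Matrix.mul_assoc, (hP.1 e).isHermitian.eq] using this
  refine ⟨hP, fun Q hQ R hR hseg => ?_⟩
  obtain ⟨a, b, ha, hb, -, hab⟩ := hseg
  -- `1 - V e * (V e)ᴴ` is annihilated by `P e`, hence by every component of a convex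
  -- decomposition of `P e`.
  have hQ1 : ∀ e, Q e * (V e * (V e)ᴴ) = Q e := fun e => by
    have h : (a • Q e + b • R e) * (1 - V e * (V e)ᴴ) = 0 := by
      have he : a • Q e + b • R e = P e := congrFun hab e
      rw [he, Matrix.mul_sub, Matrix.mul_one, hproj', sub_self]
    have h0 := mul_eq_zero_of_convex_comb (hQ.1 e) (hR.1 e) ha hb h
    rw [Matrix.mul_sub, Matrix.mul_one] at h0
    exact (sub_eq_zero.1 h0).symm
  have hQ2 : ∀ e, V e * (V e)ᴴ * Q e = Q e := fun e => by
    have := congrArg conjTranspose (hQ1 e)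
    simpa [Matrix.mul_assoc, (hQ.1 e).isHermitian.eq] using this
  have hD : ∀ e, V e * ((V e)ᴴ * (Q e - P e) * V e) * (V e)ᴴ = Q e - P e := fun e => by
    calc _ = V e * (V e)ᴴ * (Q e - P e) * (V e * (V e)ᴴ) := by simp only [Matrix.mul_assoc]
      _ = _ := by rw [Matrix.mul_sub, hQ2, hproj, Matrix.sub_mul, hQ1, hproj']
  have hz := htriv (fun e => (V e)ᴴ * (Q e - P e) * V e) (by
    simp only [hD, Finset.sum_sub_distrib]
    rw [hQ.2, hP.2, sub_self])
  funext e
  have := hD e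
  rw [hz e, Matrix.mul_zero, Matrix.zero_mul] at this
  exact (sub_eq_zero.1 this.symm)

theorem sum_smul_vecMulVec {d r : ℕ} (v : Fin r → Fin d → ℂ) (c : Fin r × Fin r → ℂ) :
    ∑ x, c x • vecMulVec (v x.1) (star (v x.2)) =
      (of v)ᵀ * of (fun n m => c (n, m)) * ((of v)ᵀ)ᴴ := by
  ext i j
  simp only [Matrix.sum_apply, Matrix.smul_apply, vecMulVec_apply, Matrix.mul_apply,
    Fintype.sum_prod_type, Finset.sum_mul, smul_eq_mul, Pi.star_apply, transpose_apply,
    conjTranspose_apply, of_apply]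
  rw [Finset.sum_comm]
  refine Finset.sum_congr rfl fun m _ => Finset.sum_congr rfl fun n _ => by ring

theorem stmt3 {d : ℕ} (hd : 1 ≤ d) {E : Type*} [Fintype E]
    (P : E → Matrix (Fin d) (Fin d) ℂ) (hP : IsPOVM P)
    (v : (e : E) → Fin (P e).rank → (Fin d → ℂ))
    (hON : ∀ e, ∀ n m, star (v e n) ⬝ᵥ v e m = if n = m then 1 else 0)
    (hEig : ∀ e n, ∃ μ : ℝ, μ ≠ 0 ∧ (P e) *ᵥ v e n = (μ : ℂ) • v e n) :
    IsExtremalPOVM P ↔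
      LinearIndependent ℂ (fun x : Σ e : E, Fin (P e).rank × Fin (P e).rank =>
        vecMulVec (v x.1 x.2.1) (star (v x.1 x.2.2))) := by
  set V : (e : E) → Matrix (Fin d) (Fin (P e).rank) ℂ := fun e => (of (v e))ᵀ with hVdef
  choose μ hμ0 hμ using hEig
  have hV : ∀ e, (V e)ᴴ * V e = 1 := fun e => by
    ext n m
    rw [one_apply, ← hON e n m]
    rfl
  have hproj : ∀ e, V e * (V e)ᴴ * P e = P e := fun e => by
    refine isometry_mul_conjTranspose_mul rfl (hV e) fun n => ?_
    have hne : (μ e n : ℂ) ≠ 0 := by exact_mod_cast hμ0 e n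
    refine ⟨(μ e n : ℂ)⁻¹ • v e n, ?_⟩
    rw [mulVecLin_apply, mulVec_smul, hμ, smul_smul, inv_mul_cancel₀ hne, one_smul]
    rfl
  have hpos : ∀ e n, 0 < μ e n := fun e n => by
    have h := (hP.1 e).dotProduct_mulVec_nonneg (v e n)
    rw [hμ, dotProduct_smul, hON, if_pos rfl, smul_eq_mul, mul_one] at h
    exact lt_of_le_of_ne (Complex.zero_le_real.1 h) (hμ0 e n).symm
  have hA : ∀ e, P e = V e * diagonal (fun n => (μ e n : ℂ)) * (V e)ᴴ := fun e => by
    have h1 : P e * (V e * (V e)ᴴ) = P e := by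
      have := congrArg conjTranspose (hproj e)
      simpa [Matrix.mul_assoc, (hP.1 e).isHermitian.eq] using this
    have h2 : P e * V e = V e * diagonal (fun n => (μ e n : ℂ)) := by
      ext i n
      rw [mul_diagonal, mul_comm]
      exact congrFun (hμ e n) i
    rw [← h2, Matrix.mul_assoc, h1]
  have hrel : ∀ c : (Σ e : E, Fin (P e).rank × Fin (P e).rank) → ℂ,
      ∑ x, c x • vecMulVec (v x.1 x.2.1) (star (v x.1 x.2.2)) =
        ∑ e, V e * of (fun n m => c ⟨e, n, m⟩) * (V e)ᴴ := fun c => by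
    rw [Fintype.sum_sigma]
    exact Finset.sum_congr rfl fun e _ => sum_smul_vecMulVec (v e) fun x => c ⟨e, x⟩
  rw [Fintype.linearIndependent_iff]
  constructor
  · rintro hext c hc ⟨e, n, m⟩
    rw [hrel] at hc
    exact congrFun (congrFun (relation_trivial hext hV hpos hA hc e) n) m
  · intro hind
    refine isExtremalPOVM_of_relation_trivial hP hproj fun C hC e => ?_
    ext n m
    exact hind (fun x => C x.1 x.2.1 x.2.2) ((hrel _).trans hC) ⟨e, n, m⟩
end

section
/- Let P be a POVM with finite outcome set E on ℂ^d, and for each e ∈ E let Z_e be the orthogonal projection onto range(P_e). Then P is extremal if and only if the projections {Z_e}_{e∈E} are weakly independent, i.e., for every family T : E → M_d(ℂ), ∑_{e∈E} Z_e T_e Z_e = 0 implies Z_e T_e Z_e = 0 for all e ∈ E. -/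
/-!
A convex decomposition `P = a Q + b R` forces `ker P_e ⊆ ker Q_e`, so `D_e = Q_e - P_e` satisfies
`Z_e D_e Z_e = D_e` and `∑ D_e = 0`; weak independence gives `D = 0`, hence extremality.

Conversely, a family `T` with `∑ Z_e T_e Z_e = 0` splits into Hermitian and anti-Hermitian parts,
so it is enough to treat Hermitian `H_e = Z_e H_e Z_e` with `∑ H_e = 0`. Writing `P_e = Bᴴ B`, such
an `H_e` has the form `Bᴴ K B` with `K` Hermitian, and `± K ≤ ‖K‖` shows that `c P_e ± H_e` is
positive semidefinite for some `c` (`exists_smul_dominates`). For large `c` the families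
`P ± c⁻¹ H` are thus POVMs with midpoint `P`, and extremality forces `H = 0`.
-/

open Matrix
open scoped ComplexOrder

section
open scoped MatrixOrder Matrix.Norms.L2Operator

lemma exists_bound_hermitian {d : ℕ} {K : Matrix (Fin d) (Fin d) ℂ} (hK : K.IsHermitian) :
    ∃ c : ℝ, 0 ≤ c ∧ (c • (1 : Matrix (Fin d) (Fin d) ℂ) + K).PosSemidef ∧
      (c • (1 : Matrix (Fin d) (Fin d) ℂ) - K).PosSemidef := by
  have hs : IsSelfAdjoint K := hK
  refine ⟨‖K‖, norm_nonneg _, ?_, ?_⟩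
  · have h := hs.neg_algebraMap_norm_le_self
    rw [Matrix.le_iff, Algebra.algebraMap_eq_smul_one] at h
    rwa [sub_neg_eq_add, add_comm] at h
  · have h := hs.le_algebraMap_norm_self
    rwa [Matrix.le_iff, Algebra.algebraMap_eq_smul_one] at h

lemma exists_eq_conjTranspose_mul_self {d : ℕ} {P : Matrix (Fin d) (Fin d) ℂ}
    (hP : P.PosSemidef) : ∃ B : Matrix (Fin d) (Fin d) ℂ, P = Bᴴ * B :=
  CStarAlgebra.nonneg_iff_eq_star_mul_self.1 hP.nonneg

end

/-- A range inclusion of matrices is a factorization `A = B * W`. -/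
lemma exists_factor_of_range_le {d : ℕ} {A B : Matrix (Fin d) (Fin d) ℂ}
    (h : LinearMap.range A.mulVecLin ≤ LinearMap.range B.mulVecLin) :
    ∃ W : Matrix (Fin d) (Fin d) ℂ, A = B * W := by
  have h1 : ∀ j, ∃ w, B *ᵥ w = A *ᵥ Pi.single j 1 := fun j =>
    h ⟨Pi.single j 1, rfl⟩
  choose w hw using h1
  refine ⟨Matrix.of fun i j => w j i, ?_⟩
  ext i j
  have := congrFun (hw j) i
  rw [Matrix.mulVec_single_one] at this
  exact this.symm

/-- A Hermitian matrix supported on the range of `P ≥ 0` is dominated, up to sign, by a multiple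
of `P`. -/
lemma exists_smul_dominates {d : ℕ} {P Z H : Matrix (Fin d) (Fin d) ℂ} (hP : P.PosSemidef)
    (hZ : Z.IsHermitian)
    (hr : LinearMap.range Z.mulVecLin = LinearMap.range P.mulVecLin)
    (hH : H.IsHermitian) (hZH : Z * H * Z = H) :
    ∃ c : ℝ, 0 ≤ c ∧ (c • P + H).PosSemidef ∧ (c • P - H).PosSemidef := by
  obtain ⟨W, hW⟩ := exists_factor_of_range_le hr.le
  obtain ⟨B, rfl⟩ := exists_eq_conjTranspose_mul_self hP
  have hZ2 : Z = Wᴴ * (Bᴴ * B) := by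
    rw [← hZ.eq, hW]
    simp [Matrix.conjTranspose_mul, Matrix.mul_assoc]
  have hK : (B * W * H * (B * W)ᴴ).IsHermitian :=
    Matrix.isHermitian_mul_mul_conjTranspose _ hH
  have hHK : H = Bᴴ * (B * W * H * (B * W)ᴴ) * B := by
    calc H = Z * H * Z := hZH.symm
      _ = (Bᴴ * B * W) * H * (Wᴴ * (Bᴴ * B)) := by rw [← hZ2, ← hW]
      _ = _ := by simp only [Matrix.conjTranspose_mul, Matrix.mul_assoc]
  obtain ⟨c, hc, h1, h2⟩ := exists_bound_hermitian hK
  refine ⟨c, hc, ?_, ?_⟩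
  · have := h1.conjTranspose_mul_mul_same B
    rw [Matrix.mul_add, Matrix.add_mul, ← hHK] at this
    simpa using this
  · have := h2.conjTranspose_mul_mul_same B
    rw [Matrix.mul_sub, Matrix.sub_mul, ← hHK] at this
    simpa using this

/-- At an extremal POVM there is no nonzero Hermitian perturbation supported on the ranges. -/
lemma hermitian_perturbation_eq_zero {d : ℕ} {E : Type*} [Fintype E]
    {P Z H : E → Matrix (Fin d) (Fin d) ℂ} (hext : IsExtremalPOVM P)
    (hZ : ∀ e, (Z e).IsHermitian)
    (hr : ∀ e, LinearMap.range (Z e).mulVecLin = LinearMap.range (P e).mulVecLin)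
    (hH : ∀ e, (H e).IsHermitian) (hZH : ∀ e, Z e * H e * Z e = H e)
    (hsum : ∑ e, H e = 0) : H = 0 := by
  have hP : IsPOVM P := hext.1
  choose c hc h1 h2 using fun e =>
    exists_smul_dominates (hP.1 e) (hZ e) (hr e) (hH e) (hZH e)
  set C : ℝ := ∑ e, c e + 1 with hC
  have hle : ∀ e, c e ≤ C := fun e => by
    have := Finset.single_le_sum (fun i _ => hc i) (Finset.mem_univ e)
    linarith
  have hCpos : 0 < C := by
    have := Finset.sum_nonneg (fun i (_ : i ∈ Finset.univ) => hc i)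
    linarith
  have hp : IsPOVM (P + C⁻¹ • H) := by
    refine ⟨fun e => ?_, ?_⟩
    · have h : (P + C⁻¹ • H) e = C⁻¹ • ((C - c e) • P e + (c e • P e + H e)) := by
        rw [← add_assoc, ← add_smul, sub_add_cancel, smul_add, smul_smul,
          inv_mul_cancel₀ hCpos.ne', one_smul]
        rfl
      rw [h]
      exact (((hP.1 e).smul (sub_nonneg.2 (hle e))).add (h1 e)).smul (inv_nonneg.2 hCpos.le)
    · simp [Finset.sum_add_distrib, ← Finset.smul_sum, hsum, hP.2]
  have hm : IsPOVM (P - C⁻¹ • H) := by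
    refine ⟨fun e => ?_, ?_⟩
    · have h : (P - C⁻¹ • H) e = C⁻¹ • ((C - c e) • P e + (c e • P e - H e)) := by
        rw [← add_sub_assoc, ← add_smul, sub_add_cancel, smul_sub, smul_smul,
          inv_mul_cancel₀ hCpos.ne', one_smul]
        rfl
      rw [h]
      exact (((hP.1 e).smul (sub_nonneg.2 (hle e))).add (h2 e)).smul (inv_nonneg.2 hCpos.le)
    · simp [Finset.sum_sub_distrib, ← Finset.smul_sum, hsum, hP.2]
  have hmid : P ∈ openSegment ℝ (P + C⁻¹ • H) (P - C⁻¹ • H) := by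
    refine ⟨1 / 2, 1 / 2, by norm_num, by norm_num, by norm_num, ?_⟩
    module
  have heq := hext.2 hp hm hmid
  have h0 : C⁻¹ • H = 0 := by simpa using heq
  exact (smul_eq_zero.1 h0).resolve_left (inv_ne_zero hCpos.ne')

/-- If `P = a Q + b R` with `Q, R` positive semidefinite, then a Hermitian `Z` that fixes `P` also
fixes `Q` on both sides, because `P x = 0` forces `⟨x, Q x⟩ = 0` and hence `Q x = 0`. -/
lemma compress_eq_self {d : ℕ} {P Q R Z : Matrix (Fin d) (Fin d) ℂ} {a b : ℝ}
    (ha : 0 < a) (hb : 0 ≤ b) (hQ : Q.PosSemidef) (hR : R.PosSemidef)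
    (hPQ : a • Q + b • R = P) (hZ : Z.IsHermitian) (hZP : Z * P = P) :
    Z * Q * Z = Q := by
  have hP : P.IsHermitian :=
    hPQ ▸ ((hQ.smul ha.le).add (hR.smul hb)).isHermitian
  have hPZ : P * Z = P := by
    have := congrArg Matrix.conjTranspose hZP
    rwa [Matrix.conjTranspose_mul, hP.eq, hZ.eq] at this
  have hQZ : Q * Z = Q := by
    have hker : ∀ x, P *ᵥ x = 0 → Q *ᵥ x = 0 := by
      intro x hx
      rw [← hQ.dotProduct_mulVec_zero_iff]
      have h1 := hQ.dotProduct_mulVec_nonneg x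
      have h2 := hR.dotProduct_mulVec_nonneg x
      have h3 : a • (star x ⬝ᵥ Q *ᵥ x) + b • (star x ⬝ᵥ R *ᵥ x) = 0 := by
        rw [← dotProduct_smul, ← dotProduct_smul, ← Matrix.smul_mulVec, ← Matrix.smul_mulVec,
          ← dotProduct_add, ← Matrix.add_mulVec, hPQ, hx, dotProduct_zero]
      have h4 := (add_eq_zero_iff_of_nonneg (smul_nonneg ha.le h1) (smul_nonneg hb h2)).1 h3
      exact (smul_eq_zero.1 h4.1).resolve_left ha.ne'
    have h : Q * (1 - Z) = 0 := by
      refine Matrix.ext_of_mulVec_single fun j => ?_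
      rw [← Matrix.mulVec_mulVec, Matrix.zero_mulVec]
      apply hker
      rw [Matrix.mulVec_mulVec, Matrix.mul_sub, Matrix.mul_one, hPZ, sub_self, Matrix.zero_mulVec]
    rw [Matrix.mul_sub, Matrix.mul_one, sub_eq_zero] at h
    exact h.symm
  have hZQ : Z * Q = Q := by
    have := congrArg Matrix.conjTranspose hQZ
    rwa [Matrix.conjTranspose_mul, hQ.isHermitian.eq, hZ.eq] at this
  rw [hZQ, hQZ]

theorem stmt4 {d : ℕ} (hd : 1 ≤ d) {E : Type*} [Fintype E]
    (P : E → Matrix (Fin d) (Fin d) ℂ) (hP : IsPOVM P)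
    (Z : E → Matrix (Fin d) (Fin d) ℂ)
    (hZherm : ∀ e, (Z e).IsHermitian) (hZidem : ∀ e, Z e * Z e = Z e)
    (hZrange : ∀ e, LinearMap.range (Z e).mulVecLin = LinearMap.range (P e).mulVecLin) :
    IsExtremalPOVM P ↔
      ∀ T : E → Matrix (Fin d) (Fin d) ℂ,
        (∑ e, Z e * T e * Z e = 0) → ∀ e, Z e * T e * Z e = 0 := by
  constructor
  · intro hext T hT
    set S : E → Matrix (Fin d) (Fin d) ℂ := fun e => Z e * T e * Z e with hS
    have hZS : ∀ e, Z e * S e * Z e = S e := fun e => by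
      calc Z e * (Z e * T e * Z e) * Z e = (Z e * Z e) * T e * (Z e * Z e) := by
            simp only [Matrix.mul_assoc]
        _ = _ := by rw [hZidem]
    have hZS' : ∀ e, Z e * (S e)ᴴ * Z e = (S e)ᴴ := fun e => by
      have := congrArg Matrix.conjTranspose (hZS e)
      rwa [Matrix.conjTranspose_mul, Matrix.conjTranspose_mul, (hZherm e).eq,
        ← Matrix.mul_assoc] at this
    have hSs : ∑ e, S e = 0 := hT
    have hSs' : ∑ e, (S e)ᴴ = 0 := by
      rw [← Matrix.conjTranspose_sum, hSs, Matrix.conjTranspose_zero]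
    have hre : (fun e => S e + (S e)ᴴ) = 0 := by
      refine hermitian_perturbation_eq_zero hext hZherm hZrange
        (fun e => Matrix.isHermitian_add_transpose_self _) (fun e => ?_) ?_
      · rw [Matrix.mul_add, Matrix.add_mul, hZS, hZS']
      · rw [Finset.sum_add_distrib, hSs, hSs', add_zero]
    have him : (fun e => Complex.I • (S e - (S e)ᴴ)) = 0 := by
      refine hermitian_perturbation_eq_zero hext hZherm hZrange (fun e => ?_) (fun e => ?_) ?_
      · rw [Matrix.IsHermitian, Matrix.conjTranspose_smul, Matrix.conjTranspose_sub,
          Matrix.conjTranspose_conjTranspose, Complex.star_def, Complex.conj_I]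
        module
      · rw [Matrix.mul_smul, Matrix.smul_mul, Matrix.mul_sub, Matrix.sub_mul, hZS, hZS']
      · rw [← Finset.smul_sum, Finset.sum_sub_distrib, hSs, hSs', sub_zero, smul_zero]
    intro e
    have h1 : S e + (S e)ᴴ = 0 := congrFun hre e
    have h2 : S e - (S e)ᴴ = 0 :=
      (smul_eq_zero.1 (congrFun him e)).resolve_left Complex.I_ne_zero
    have h3 : (2 : ℂ) • S e = (S e + (S e)ᴴ) + (S e - (S e)ᴴ) := by module
    rw [h1, h2, add_zero] at h3
    exact (smul_eq_zero.1 h3).resolve_left two_ne_zero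
  · intro hind
    refine ⟨hP, ?_⟩
    rintro Q hQ R hR ⟨a, b, ha, hb, hab, hPQ⟩
    have hZP : ∀ e, Z e * P e = P e := fun e => by
      obtain ⟨W, hW⟩ := exists_factor_of_range_le (hZrange e).ge
      rw [hW, ← Matrix.mul_assoc, hZidem]
    have hZPZ : ∀ e, Z e * P e * Z e = P e := fun e =>
      compress_eq_self one_pos le_rfl (hP.1 e) (hP.1 e) (by simp) (hZherm e) (hZP e)
    have hZQZ : ∀ e, Z e * Q e * Z e = Q e := fun e =>
      compress_eq_self ha hb.le (hQ.1 e) (hR.1 e) (congrFun hPQ e) (hZherm e) (hZP e)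
    have hD : ∀ e, Z e * (Q e - P e) * Z e = Q e - P e := fun e => by
      rw [Matrix.mul_sub, Matrix.sub_mul, hZQZ, hZPZ]
    have h := hind (fun e => Q e - P e) (by
      simp only [hD]
      rw [Finset.sum_sub_distrib, hQ.2, hP.2, sub_self])
    funext e
    have he := h e
    simp only [hD] at he
    exact sub_eq_zero.1 he
end

section
/- If a POVM P with finite outcome set E on ℂ^d satisfies ∑_{e∈E} (rank P_e)² > d², then P is not extremal. -/
/-!
Write each effect as `P e = A e * (A e)ᴴ`, where `A e` has `r e = rank (P e)` columns and a left
inverse (`Matrix.PosSemidef.exists_rank_factorization`). The complex-linear map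
`X ↦ ∑ e, A e * X e * (A e)ᴴ` from `∏ e, M_{r e}(ℂ)` to `M_d(ℂ)` goes from dimension `∑ e, (r e)²`
to the smaller dimension `d²`, so its kernel is nonzero. The kernel is closed under conjugate
transpose, hence contains a nonzero Hermitian family `H` (`exists_hermitian_ne_zero`). For small
real `t ≠ 0` both families `A e * (1 ± t • H e) * (A e)ᴴ` are POVMs, since `1 ± t • H e` is positive
semidefinite (`exists_posSemidef_one_add_smul`). They have midpoint `P`, and they differ from `P`
because each `A e` is left invertible.
-/

open Matrix
open scoped ComplexOrder

open scoped Matrix.Norms.L2Operator MatrixOrder in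
/-- Since `-‖H‖ ≤ H ≤ ‖H‖` in the C⋆-algebra of matrices, a small Hermitian perturbation of the
identity stays positive semidefinite. -/
lemma exists_posSemidef_one_add_smul {n : Type*} [Fintype n] [DecidableEq n] (H : Matrix n n ℂ)
    (hH : H.IsHermitian) :
    ∃ c : ℝ, 0 ≤ c ∧ ∀ t : ℝ, |t| * c ≤ 1 → (1 + t • H).PosSemidef := by
  refine ⟨‖H‖, norm_nonneg _, fun t ht => ?_⟩
  have hs : IsSelfAdjoint (t • H) := IsSelfAdjoint.smul (IsSelfAdjoint.all t) hH
  have h1 := hs.neg_algebraMap_norm_le_self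
  have h2 : algebraMap ℝ (Matrix n n ℂ) ‖t • H‖ ≤ algebraMap ℝ (Matrix n n ℂ) 1 := by
    apply algebraMap_mono
    rwa [norm_smul, Real.norm_eq_abs]
  rw [map_one] at h2
  have h3 : 0 ≤ 1 + t • H := by
    have := (neg_le_neg h2).trans h1
    exact neg_le_iff_add_nonneg'.mp this
  exact Matrix.nonneg_iff_posSemidef.mp h3

/-- Rank factorization of a positive semidefinite matrix: `P = A Aᴴ` where `A` has `rank P` columns
and a left inverse. The columns of `A` are the eigenvectors of nonzero eigenvalue `λ`, scaled
by `√λ`. -/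
lemma Matrix.PosSemidef.exists_rank_factorization {d : ℕ} (P : Matrix (Fin d) (Fin d) ℂ) (hP : P.PosSemidef) :
    ∃ (A : Matrix (Fin d) (Fin P.rank) ℂ) (B : Matrix (Fin P.rank) (Fin d) ℂ),
      P = A * Aᴴ ∧ B * A = 1 := by
  have hH := hP.isHermitian
  let f : Fin P.rank ≃ {i // hH.eigenvalues i ≠ 0} :=
    (Fintype.equivFinOfCardEq hH.rank_eq_card_non_zero_eigs.symm).symm
  let U : Matrix (Fin d) (Fin d) ℂ := hH.eigenvectorUnitary
  have hU : Uᴴ * U = 1 := Unitary.coe_star_mul_self hH.eigenvectorUnitary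
  let l : Fin d → ℝ := hH.eigenvalues
  have hl : ∀ i, 0 ≤ l i := hP.eigenvalues_nonneg
  refine ⟨Matrix.of fun i k => U i (f k) * (Real.sqrt (l (f k)) : ℂ),
    Matrix.of fun k i => ((Real.sqrt (l (f k)))⁻¹ : ℂ) * star (U i (f k)), ?_, ?_⟩
  · have h := hH.spectral_theorem
    have h' : P = U * diagonal (fun i => (l i : ℂ)) * Uᴴ := by
      conv_lhs => rw [h]
      rfl
    ext i j
    conv_lhs => rw [h']
    rw [Matrix.mul_apply, Matrix.mul_apply]
    simp only [Matrix.mul_diagonal, conjTranspose_apply, Matrix.of_apply]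
    -- Indices with zero eigenvalue contribute nothing to the spectral sum.
    have key : ∀ g : Fin d → ℂ, (∀ i, l i = 0 → g i = 0) → ∑ i, g i = ∑ k, g (f k) := by
      intro g hg
      refine (Fintype.sum_of_injective (fun k => (f k : Fin d))
        (Subtype.val_injective.comp f.injective) _ g (fun i hi => hg i ?_) fun _ => rfl).symm
      by_contra h0
      exact hi ⟨f.symm ⟨i, h0⟩, by simp⟩
    rw [key _ (by intro i hi; simp [hi])]
    refine Finset.sum_congr rfl fun k _ => ?_
    have : (l (f k) : ℂ) = (Real.sqrt (l (f k)) : ℂ) * (Real.sqrt (l (f k)) : ℂ) := by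
      rw [← Complex.ofReal_mul, Real.mul_self_sqrt (hl _)]
    rw [this]
    simp only [star_mul', RCLike.star_def, Complex.conj_ofReal]
    ring
  · ext k m
    rw [Matrix.mul_apply]
    have h := congrFun (congrFun hU (f k)) (f m)
    rw [Matrix.mul_apply] at h
    have hpos : ((Real.sqrt (l (f k))) : ℂ) ≠ 0 := by
      have := (Real.sqrt_pos.2 ((hl _).lt_of_ne' (f k).2)).ne'
      exact_mod_cast this
    calc _ = ((Real.sqrt (l (f k)))⁻¹ : ℂ) * (∑ i, Uᴴ (f k) i * U i (f m)) * (Real.sqrt (l (f m)) : ℂ) := by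
          rw [Finset.mul_sum, Finset.sum_mul]
          refine Finset.sum_congr rfl fun i _ => ?_
          simp only [Matrix.of_apply, conjTranspose_apply]
          ring
      _ = _ := by
          rw [h]
          by_cases hkm : k = m
          · subst hkm; simp [hpos]
          · have : (f k : Fin d) ≠ f m := fun h => hkm (f.injective (Subtype.ext h))
            simp [hkm, this]

/-- A nonzero subspace of families of square matrices that is closed under conjugate transpose
contains a nonzero Hermitian family: for `X ≠ 0`, one of `X + Xᴴ` and `i (X - Xᴴ)` is nonzero. -/
lemma exists_hermitian_ne_zero {E : Type*} {r : E → ℕ}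
    (K : Submodule ℂ (∀ e, Matrix (Fin (r e)) (Fin (r e)) ℂ)) (hK : K ≠ ⊥)
    (hstar : ∀ X ∈ K, (fun e => (X e)ᴴ) ∈ K) :
    ∃ H ∈ K, H ≠ 0 ∧ ∀ e, (H e).IsHermitian := by
  obtain ⟨X, hX, hX0⟩ := Submodule.exists_mem_ne_zero_of_ne_bot hK
  set Y : ∀ e, Matrix (Fin (r e)) (Fin (r e)) ℂ := fun e => (X e)ᴴ with hY
  by_cases hs : X + Y = 0
  · refine ⟨Complex.I • (X - Y), K.smul_mem _ (K.sub_mem hX (hstar X hX)), fun h => hX0 ?_,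
      fun e => ?_⟩
    · have h1 : X - Y = 0 := (smul_eq_zero.1 h).resolve_left Complex.I_ne_zero
      have h2 : (2 : ℂ) • X = (X + Y) + (X - Y) := by module
      rw [hs, h1, add_zero] at h2
      exact (smul_eq_zero.1 h2).resolve_left two_ne_zero
    · simp only [Matrix.IsHermitian, hY, Pi.smul_apply, Pi.sub_apply, conjTranspose_smul,
        conjTranspose_sub, conjTranspose_conjTranspose, RCLike.star_def, Complex.conj_I]
      module
  · refine ⟨X + Y, K.add_mem hX (hstar X hX), hs, fun e => ?_⟩
    simp only [Matrix.IsHermitian, hY, Pi.add_apply, conjTranspose_add,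
      conjTranspose_conjTranspose, add_comm]

theorem stmt5 {d : ℕ} (hd : 1 ≤ d) {E : Type*} [Fintype E]
    (P : E → Matrix (Fin d) (Fin d) ℂ) (hP : IsPOVM P)
    (hrank : d ^ 2 < ∑ e, (P e).rank ^ 2) :
    ¬ IsExtremalPOVM P := by
  intro hext
  choose A B hA hB using fun e => (hP.1 e).exists_rank_factorization
  let Φ : (∀ e, Matrix (Fin (P e).rank) (Fin (P e).rank) ℂ) →ₗ[ℂ] Matrix (Fin d) (Fin d) ℂ :=
    { toFun := fun X => ∑ e, A e * X e * (A e)ᴴ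
      map_add' := fun X Y => by simp [Matrix.mul_add, Matrix.add_mul, Finset.sum_add_distrib]
      map_smul' := fun c X => by simp [Finset.smul_sum] }
  have hker : LinearMap.ker Φ ≠ ⊥ := by
    apply LinearMap.ker_ne_bot_of_finrank_lt
    simpa [Module.finrank_pi_fintype, Module.finrank_matrix, ← sq] using hrank
  obtain ⟨H, hHK, hH0, hH⟩ := exists_hermitian_ne_zero _ hker (by
    intro X hX
    have h0 : ∑ e, A e * X e * (A e)ᴴ = 0 := hX
    change ∑ e, A e * (X e)ᴴ * (A e)ᴴ = 0
    simpa [conjTranspose_sum, Matrix.mul_assoc] using congrArg conjTranspose h0)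
  have hsum : ∑ e, A e * H e * (A e)ᴴ = 0 := hHK
  choose c hc0 hc using fun e => exists_posSemidef_one_add_smul (H e) (hH e)
  -- A single step size that works for all outcomes, in both directions.
  let ε : ℝ := (1 + ∑ e, c e)⁻¹
  have hS : 0 ≤ ∑ e, c e := Finset.sum_nonneg fun e _ => hc0 e
  have hε : 0 < ε := by positivity
  have hεc : ∀ e, ε * c e ≤ 1 := fun e => by
    have : c e ≤ ∑ e, c e := Finset.single_le_sum (fun e _ => hc0 e) (Finset.mem_univ e)
    rw [inv_mul_le_iff₀ (by positivity)]
    linarith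
  let D : E → Matrix (Fin d) (Fin d) ℂ := fun e => A e * H e * (A e)ᴴ
  have hpovm : ∀ t : ℝ, |t| = ε → IsPOVM (P + t • D) := by
    intro t ht
    refine ⟨fun e => ?_, ?_⟩
    · have : (P + t • D) e = A e * (1 + t • H e) * (A e)ᴴ := by
        simp [D, Matrix.mul_add, Matrix.add_mul, ← hA e]
      rw [this]
      exact (hc e t (by rw [ht]; exact hεc e)).mul_mul_conjTranspose_same _
    · simp only [Pi.add_apply, Pi.smul_apply, Finset.sum_add_distrib, ← Finset.smul_sum, hP.2]
      simp [D, hsum]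
  have heq : P + ε • D = P := by
    refine (mem_extremePoints.1 hext).2 _ (hpovm ε (abs_of_pos hε)) _
      (hpovm (-ε) (by rw [abs_neg, abs_of_pos hε])) ?_ |>.1
    exact ⟨1 / 2, 1 / 2, by norm_num, by norm_num, by norm_num, by module⟩
  have hD : D = 0 := (smul_eq_zero.1 (add_eq_left.1 heq)).resolve_left hε.ne'
  apply hH0
  funext e
  have hBs : (A e)ᴴ * (B e)ᴴ = 1 := by rw [← conjTranspose_mul, hB, conjTranspose_one]
  calc H e = (B e * A e) * H e * ((A e)ᴴ * (B e)ᴴ) := by rw [hB, hBs, one_mul, mul_one]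
    _ = B e * D e * (B e)ᴴ := by simp only [D, Matrix.mul_assoc]
    _ = 0 := by rw [hD]; simp
end

section
/- If P is an extremal POVM with finite outcome set E on ℂ^d such that the number of outcomes e with P_e ≠ 0 equals d², then every element of P has rank at most one. -/
/-!
Suppose some element `P e₀` has rank at least two. A rank-one summand `D` of `P e₀ = Bᴴ * B`
satisfies `0 ≤ D ≤ P e₀` and is not a scalar multiple of `P e₀`
(`exists_between_not_multiple`). Consider a real relation `∑ a e • P e + b • D = 0`. Assigning
`b • D` to the outcome `e₀`, its terms form a perturbation of `P` with total zero that is bounded,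
up to scaling, by `P` in both directions, so extremality forces each term to vanish
(`perturbation_eq_zero`, `relation_terms_eq_zero`); hence all coefficients on the nonzero `P e`, and
`b`, vanish. So the nonzero `P e` together with `D` are `d ^ 2 + 1` Hermitian matrices linearly
independent over `ℝ`, and therefore over `ℂ` (`linearIndependent_of_real`), in a space of complex
dimension `d ^ 2`: a contradiction.
-/

open Matrix
open scoped ComplexOrder

/-- Extremality rules out nonzero perturbations `D` with total zero and `-C P ≤ D ≤ C P`. -/
lemma perturbation_eq_zero {d : ℕ} {E : Type*} [Fintype E]
    {P D : E → Matrix (Fin d) (Fin d) ℂ} (hext : IsExtremalPOVM P) {C : ℝ} (hC : 0 < C)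
    (hadd : ∀ e, (C • P e + D e).PosSemidef) (hsub : ∀ e, (C • P e - D e).PosSemidef)
    (hsum : ∑ e, D e = 0) : D = 0 := by
  obtain ⟨hP, hseg⟩ := mem_extremePoints.1 hext
  have hCi : (0 : ℝ) ≤ C⁻¹ := (inv_pos.2 hC).le
  have h1 : IsPOVM (P + C⁻¹ • D) := by
    refine ⟨fun e => ?_, ?_⟩
    · have := (hadd e).smul hCi
      rwa [smul_add, smul_smul, inv_mul_cancel₀ hC.ne', one_smul] at this
    · simp [Finset.sum_add_distrib, ← Finset.smul_sum, hsum, hP.2]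
  have h2 : IsPOVM (P - C⁻¹ • D) := by
    refine ⟨fun e => ?_, ?_⟩
    · have := (hsub e).smul hCi
      rwa [smul_sub, smul_smul, inv_mul_cancel₀ hC.ne', one_smul] at this
    · simp [Finset.sum_sub_distrib, ← Finset.smul_sum, hsum, hP.2]
  have h3 : P ∈ openSegment ℝ (P + C⁻¹ • D) (P - C⁻¹ • D) := by
    refine ⟨1 / 2, 1 / 2, by norm_num, by norm_num, by norm_num, ?_⟩
    module
  have h4 := (hseg _ h1 _ h2 h3).1
  simpa [hC.ne'] using h4

/-- If `0 ≤ D ≤ P` and `|a| + |b| ≤ C`, then `0 ≤ C P + a P + b D`. -/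
lemma posSemidef_combination {d : ℕ} {P D : Matrix (Fin d) (Fin d) ℂ} (hD : D.PosSemidef)
    (hPD : (P - D).PosSemidef) {C a b : ℝ} (hC : |a| + |b| ≤ C) :
    (C • P + (a • P + b • D)).PosSemidef := by
  have ha := neg_abs_le a
  have hb := neg_abs_le b
  have hb0 := abs_nonneg b
  have h := (hPD.smul (show (0 : ℝ) ≤ C + a by linarith)).add
    (hD.smul (show (0 : ℝ) ≤ C + a + b by linarith))
  convert h using 1
  module

/-- In a real relation between the elements of an extremal POVM and a matrix `0 ≤ D ≤ P e₀`, the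
contribution of each outcome vanishes, where the term of `D` is counted with the outcome `e₀`. -/
lemma relation_terms_eq_zero {d : ℕ} {E : Type*} [Fintype E] [DecidableEq E]
    {P : E → Matrix (Fin d) (Fin d) ℂ} (hext : IsExtremalPOVM P) {e₀ : E}
    {D : Matrix (Fin d) (Fin d) ℂ} (hD : D.PosSemidef) (hPD : (P e₀ - D).PosSemidef)
    (a : E → ℝ) (b : ℝ) (hsum : ∑ e, a e • P e + b • D = 0) (e : E) :
    a e • P e + (if e = e₀ then b • D else 0) = 0 := by
  have hP : IsPOVM P := hext.1
  have hale : ∀ e, |a e| ≤ ∑ e, |a e| := fun e =>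
    Finset.single_le_sum (f := fun e => |a e|) (fun _ _ => abs_nonneg _) (Finset.mem_univ e)
  have hS : (0 : ℝ) ≤ ∑ e, |a e| := Finset.sum_nonneg fun _ _ => abs_nonneg _
  have hb := abs_nonneg b
  -- Outcomes other than `e₀` are covered by the matrix bound with `D = 0`.
  have key : ∀ s t : E → ℝ, (∀ e, |s e| ≤ |a e|) → (∀ e, |t e| ≤ |b|) → ∀ e,
      ((∑ e, |a e| + |b| + 1) • P e
        + (s e • P e + t e • (if e = e₀ then D else 0))).PosSemidef := by
    intro s t hs ht e
    have h1 := hs e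
    have h2 := ht e
    have h3 := hale e
    apply posSemidef_combination
    · split_ifs
      exacts [hD, PosSemidef.zero]
    · split_ifs with h
      · rwa [h]
      · simpa using hP.1 e
    · linarith
  refine congrFun (perturbation_eq_zero (P := P)
    (D := fun e => a e • P e + (if e = e₀ then b • D else 0)) hext
    (C := ∑ e, |a e| + |b| + 1) (by linarith) (fun e => ?_) (fun e => ?_) ?_) e
  · simpa using key a (fun _ => b) (fun _ => le_rfl) (fun _ => le_rfl) e
  · convert key (fun e => -a e) (fun _ => -b) (fun _ => (abs_neg _).le)
      (fun _ => (abs_neg _).le) e using 1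
    split_ifs <;> module
  · simpa [Finset.sum_add_distrib] using hsum

/-- Taking adjoints in a complex relation between Hermitian matrices shows that the real and
imaginary parts of its coefficients are relations too. -/
lemma linearIndependent_of_real {d : ℕ} {ι : Type*} [Fintype ι]
    {H : ι → Matrix (Fin d) (Fin d) ℂ} (hH : ∀ i, (H i).IsHermitian)
    (hreal : ∀ c : ι → ℝ, ∑ i, c i • H i = 0 → ∀ i, c i = 0) : LinearIndependent ℂ H := by
  rw [Fintype.linearIndependent_iff]
  intro g hg
  have hg' : ∑ i, star (g i) • H i = 0 := by
    have := congrArg conjTranspose hg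
    simpa [conjTranspose_sum, conjTranspose_smul, (hH _).eq] using this
  have hre : ∀ i, (g i).re = 0 := by
    refine hreal _ ?_
    have h : ∑ i, (g i).re • H i = (1 / 2 : ℂ) • (∑ i, g i • H i + ∑ i, star (g i) • H i) := by
      rw [← Finset.sum_add_distrib, Finset.smul_sum]
      refine Finset.sum_congr rfl fun i _ => ?_
      rw [← add_smul, smul_smul, ← Complex.coe_smul]
      congr 1
      apply Complex.ext <;> simp <;> ring
    rw [h, hg, hg']
    simp
  have him : ∀ i, (g i).im = 0 := by
    refine hreal _ ?_
    have h : ∑ i, (g i).im • H i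
        = (-Complex.I / 2 : ℂ) • (∑ i, g i • H i - ∑ i, star (g i) • H i) := by
      rw [← Finset.sum_sub_distrib, Finset.smul_sum]
      refine Finset.sum_congr rfl fun i _ => ?_
      rw [← sub_smul, smul_smul, ← Complex.coe_smul]
      congr 1
      apply Complex.ext <;> simp <;> ring
    rw [h, hg, hg']
    simp
  exact fun i => Complex.ext (hre i) (him i)

/-- A positive semidefinite matrix `P = Bᴴ * B` of rank at least two dominates a nonzero rank-one
matrix, one of the summands `bᴴ b` over the rows `b` of `B`. Comparing ranks, this matrix and `P`
are linearly independent over `ℝ`. -/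
lemma exists_between_not_multiple {d : ℕ} {P : Matrix (Fin d) (Fin d) ℂ} (hP : P.PosSemidef)
    (hrank : 1 < P.rank) : ∃ D : Matrix (Fin d) (Fin d) ℂ, D.PosSemidef ∧ (P - D).PosSemidef ∧
      ∀ a b : ℝ, a • P + b • D = 0 → a = 0 ∧ b = 0 := by
  obtain ⟨B, rfl⟩ : ∃ B : Matrix (Fin d) (Fin d) ℂ, P = Bᴴ * B := by
    open scoped MatrixOrder Matrix.Norms.L2Operator in
    exact CStarAlgebra.nonneg_iff_eq_star_mul_self.mp hP.nonneg
  have hsum : Bᴴ * B = ∑ k, vecMulVec (star (B k)) (B k) := by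
    ext i j
    simp [mul_apply, Matrix.sum_apply, vecMulVec_apply]
  have hpos : ∀ k, (vecMulVec (star (B k)) (B k)).PosSemidef := fun k =>
    posSemidef_vecMulVec_star_self (B k)
  obtain ⟨k, hk⟩ : ∃ k, vecMulVec (star (B k)) (B k) ≠ 0 := by
    by_contra! h
    rw [hsum, Finset.sum_congr rfl fun k _ => h k] at hrank
    simp at hrank
  refine ⟨_, hpos k, ?_, fun a b hab => ?_⟩
  · rw [hsum, ← Finset.add_sum_erase _ _ (Finset.mem_univ k), add_sub_cancel_left]
    exact posSemidef_sum _ fun i _ => hpos i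
  · have ha : a = 0 := by
      by_contra ha
      have h : Bᴴ * B = vecMulVec ((-(a⁻¹ * b)) • star (B k)) (B k) := by
        rw [smul_vecMulVec]
        have h1 := congrArg (fun M => a⁻¹ • M) hab
        simp only [smul_add, smul_smul, inv_mul_cancel₀ ha, one_smul, smul_zero] at h1
        rw [neg_smul]
        exact eq_neg_of_add_eq_zero_left h1
      rw [h] at hrank
      exact absurd (rank_vecMulVec_le _ _) (not_le.2 hrank)
    subst ha
    simpa [hk] using hab

theorem stmt6 {d : ℕ} (hd : 1 ≤ d) {E : Type*} [Fintype E]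
    (P : E → Matrix (Fin d) (Fin d) ℂ) (hP : IsPOVM P)
    (hext : IsExtremalPOVM P)
    (hcard : Fintype.card {e : E // P e ≠ 0} = d ^ 2) :
    ∀ e, (P e).rank ≤ 1 := by
  classical
  intro e₀
  by_contra! hrank
  obtain ⟨D, hD, hPD, hmul⟩ := exists_between_not_multiple (hP.1 e₀) hrank
  have hli : LinearIndependent ℂ
      (fun o : Option {e : E // P e ≠ 0} => o.elim D fun e => P e.1) := by
    apply linearIndependent_of_real
    · rintro (_ | e)
      exacts [hD.1, (hP.1 e.1).1]
    · intro c hc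
      -- The coefficients extended by zero to the outcomes with `P e = 0`.
      let a : E → ℝ := fun e => if h : P e ≠ 0 then c (some ⟨e, h⟩) else 0
      have ha : ∀ e : {e : E // P e ≠ 0}, a e.1 = c (some e) := fun e => dif_pos e.2
      have hsum : ∑ e, a e • P e = ∑ e : {e : E // P e ≠ 0}, c (some e) • P e.1 := by
        simp only [← ha]
        rw [← Finset.sum_subtype (Finset.univ.filter fun e => P e ≠ 0) (by simp)
          (fun e => a e • P e)]
        refine (Finset.sum_subset (Finset.filter_subset _ _) fun e _ he => ?_).symm
        have : P e = 0 := by simpa using he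
        rw [this, smul_zero]
      have hrel : ∑ e, a e • P e + c none • D = 0 := by
        rw [hsum, add_comm]
        simpa [Fintype.sum_option] using hc
      have hterm := relation_terms_eq_zero hext hD hPD a (c none) hrel
      have h0 : a e₀ = 0 ∧ c none = 0 := hmul _ _ (by simpa using hterm e₀)
      rintro (_ | e)
      · exact h0.2
      · rw [← ha]
        have := hterm e.1
        simpa [h0.2, e.2] using this
  have := hli.fintype_card_le_finrank
  rw [Fintype.card_option, Module.finrank_matrix, Fintype.card_fin, Module.finrank_self,
    mul_one, ← sq, ← hcard] at this
  convert absurd this (Nat.not_succ_le_self _)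
end

section
/- If P is an extremal POVM with finite outcome set E on ℂ^d, then the ranges of its elements are pairwise disjoint subspaces: for all e ≠ f in E, range(P_e) ∩ range(P_f) = {0}. -/
/-!
If `v` is a vector in both `range (P e)` and `range (P f)`, then for small `t > 0` the rank-one
matrix `t v vᴴ` can be moved from outcome `e` to outcome `f`, or the other way round, without
losing positivity. Hence `P` is the midpoint of two POVMs, and extremality forces `v vᴴ = 0`.

Positivity is `exists_sub_vecMulVec_posSemidef`: a positive semidefinite `A` dominates a positive
multiple of `v vᴴ` for every `v` in its range.
-/

open Matrix
open scoped ComplexOrder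

/-- For `v = A w`, `s = wᴴ A w` and `l` real, the congruence
`(1 - l v wᴴ) A (1 - l w vᴴ) = A - l (2 - l s) v vᴴ` is positive semidefinite;
`l = 1 / (s + 1)` makes the coefficient positive. -/
lemma exists_sub_vecMulVec_posSemidef {d : ℕ} {A : Matrix (Fin d) (Fin d) ℂ}
    (hA : A.PosSemidef) (w : Fin d → ℂ) :
    ∃ c : ℝ, 0 < c ∧ ∀ t : ℝ, t ≤ c →
      (A - t • vecMulVec (A *ᵥ w) (star (A *ᵥ w))).PosSemidef := by
  set v := A *ᵥ w with hv
  have hs0 : 0 ≤ star w ⬝ᵥ v := hA.dotProduct_mulVec_nonneg w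
  obtain ⟨s, hs, hsv⟩ : ∃ s : ℝ, 0 ≤ s ∧ star w ⬝ᵥ v = (s : ℂ) := by
    rw [Complex.le_def] at hs0
    exact ⟨(star w ⬝ᵥ v).re, hs0.1, Complex.ext rfl hs0.2.symm⟩
  have hwA : star w ᵥ* A = star v := by
    rw [hv, star_mulVec, hA.isHermitian.eq]
  set l : ℝ := 1 / (s + 1) with hl
  have hl0 : 0 < l := by positivity
  have hls : l * s < 1 := by
    rw [hl, one_div, inv_mul_lt_iff₀ (by positivity)]; linarith
  refine ⟨l * (2 - l * s), mul_pos hl0 (by linarith), fun t ht => ?_⟩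
  have key : (1 - l • vecMulVec w (star v))ᴴ * A * (1 - l • vecMulVec w (star v))
      = A - (l * (2 - l * s)) • vecMulVec v (star v) := by
    have h1 : (1 - l • vecMulVec w (star v))ᴴ * A = A - l • vecMulVec v (star v) := by
      rw [conjTranspose_sub, conjTranspose_one, conjTranspose_smul, conjTranspose_vecMulVec,
        star_star, sub_mul, one_mul, smul_mul_assoc, vecMulVec_mul, hwA, star_trivial]
    have hvw : star v ⬝ᵥ w = (s : ℂ) := by
      rw [← hwA, ← dotProduct_mulVec, hsv]
    rw [h1, mul_sub, mul_one, sub_mul, mul_smul_comm, mul_vecMulVec, ← hv, smul_mul_assoc,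
      mul_smul_comm, vecMulVec_mul_vecMulVec, hvw]
    ext i j
    simp [vecMulVec_apply]
    ring
  have h2 : (A - t • vecMulVec v (star v)) =
      (A - (l * (2 - l * s)) • vecMulVec v (star v))
        + (l * (2 - l * s) - t) • vecMulVec v (star v) := by
    module
  rw [h2, ← key]
  exact (hA.conjTranspose_mul_mul_same _).add
    ((posSemidef_vecMulVec_self_star v).smul (sub_nonneg.2 ht))

theorem stmt7 {d : ℕ} (hd : 1 ≤ d) {E : Type*} [Fintype E]
    (P : E → Matrix (Fin d) (Fin d) ℂ) (hP : IsPOVM P)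
    (hext : IsExtremalPOVM P) :
    ∀ e f : E, e ≠ f →
      LinearMap.range (P e).mulVecLin ⊓ LinearMap.range (P f).mulVecLin = ⊥ := by
  classical
  intro e f hef
  rw [eq_bot_iff]
  rintro v ⟨⟨w, hw⟩, ⟨w', hw'⟩⟩
  rw [mulVecLin_apply] at hw hw'
  obtain ⟨c, hc, hce⟩ := exists_sub_vecMulVec_posSemidef (hP.1 e) w
  obtain ⟨c', hc', hcf⟩ := exists_sub_vecMulVec_posSemidef (hP.1 f) w'
  rw [hw] at hce
  rw [hw'] at hcf
  set V := vecMulVec v (star v) with hV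
  set t := min c c' with ht
  have ht0 : 0 < t := lt_min hc hc'
  let D : E → Matrix (Fin d) (Fin d) ℂ := Pi.single e V - Pi.single f V
  have hDsum : ∑ g, D g = 0 := by
    simp [D, Finset.sum_sub_distrib, Finset.sum_pi_single']
  have hpovm : ∀ r : ℝ, |r| ≤ t → IsPOVM (P - r • D) := by
    intro r hr
    obtain ⟨hr1, hr2⟩ := abs_le.1 hr
    refine ⟨fun g => ?_, ?_⟩
    · by_cases hge : g = e
      · subst hge
        simpa [D, hef] using hce r (hr2.trans (min_le_left _ _))
      · by_cases hgf : g = f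
        · subst hgf
          simpa [D, hge] using hcf (-r) ((neg_le.1 hr1).trans (min_le_right _ _))
        · simpa [D, hge, hgf] using hP.1 g
    · simp only [Pi.sub_apply, Pi.smul_apply, Finset.sum_sub_distrib, ← Finset.smul_sum, hDsum,
        hP.2, smul_zero, sub_zero]
  have hmid : P ∈ openSegment ℝ (P - t • D) (P - (-t) • D) :=
    ⟨1 / 2, 1 / 2, by norm_num, by norm_num, by norm_num, by module⟩
  have hEq : P - t • D = P := hext.2 (hpovm t (abs_of_pos ht0).le)
    (hpovm (-t) (by rw [abs_neg, abs_of_pos ht0])) hmid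
  have hD : D = 0 := (smul_eq_zero.1 (sub_eq_self.1 hEq)).resolve_left ht0.ne'
  have hV0 : V = 0 := by simpa [D, hef] using congrFun hD e
  simpa [hV, vecMulVec_eq_zero] using hV0
end

section
/- Every orthogonal POVM is extremal: if P : E → M_d(ℂ) is a family of orthogonal projections (each P_e is Hermitian and idempotent) with ∑_{e∈E} P_e = I, then P is an extremal POVM. -/
/-!
An orthogonal projection `Q` is an extreme point of the operator interval `[0, 1]`: if
`Q = a A + b B` with `0 ≤ A, B ≤ 1`, `a, b > 0` and `a + b = 1`, then every `x` in `ker Q` satisfies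
`⟨x, A x⟩ = 0`, hence `A x = 0`, so `A (1 - Q) = 0` (`posSemidef_mul_one_sub_eq_zero`). The same
applied to `1 - Q = a (1 - A) + b (1 - B)` gives `(1 - A) Q = 0`, and adding up, `A = A Q = Q`.
Every effect of a POVM lies in `[0, 1]`, so any decomposition of a projection-valued POVM is
trivial in each outcome separately.
-/

open Matrix
open scoped ComplexOrder

/-- A positive summand of an idempotent `Q` vanishes on `ker Q`, which is the range of `1 - Q`. -/
lemma posSemidef_mul_one_sub_eq_zero {d : ℕ} {A B Q : Matrix (Fin d) (Fin d) ℂ} {a b : ℝ}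
    (hA : A.PosSemidef) (hB : B.PosSemidef) (ha : 0 < a) (hb : 0 < b)
    (hQ : a • A + b • B = Q) (hidem : Q * Q = Q) : A * (1 - Q) = 0 := by
  refine Matrix.ext_of_mulVec_single fun i => ?_
  rw [← Matrix.mulVec_mulVec, Matrix.zero_mulVec]
  set y := (1 - Q) *ᵥ Pi.single i 1 with hy
  have hQy : Q *ᵥ y = 0 := by
    rw [hy, Matrix.mulVec_mulVec, mul_sub, mul_one, hidem, sub_self, Matrix.zero_mulVec]
  rw [← hA.dotProduct_mulVec_zero_iff]
  have hAy := hA.dotProduct_mulVec_nonneg y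
  have hBy := hB.dotProduct_mulVec_nonneg y
  have hsum : a • (star y ⬝ᵥ A *ᵥ y) + b • (star y ⬝ᵥ B *ᵥ y) = 0 := by
    rw [← dotProduct_smul, ← dotProduct_smul, ← dotProduct_add, ← Matrix.smul_mulVec,
      ← Matrix.smul_mulVec, ← Matrix.add_mulVec, hQ, hQy, dotProduct_zero]
  have h0 := (add_eq_zero_iff_of_nonneg (smul_nonneg ha.le hAy) (smul_nonneg hb.le hBy)).1 hsum
  exact (smul_eq_zero.1 h0.1).resolve_left ha.ne'

lemma IsPOVM.posSemidef_one_sub {d : ℕ} {E : Type*} [Fintype E]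
    {P : E → Matrix (Fin d) (Fin d) ℂ} (hP : IsPOVM P) (e : E) : (1 - P e).PosSemidef := by
  classical
  rw [← hP.2, ← Finset.add_sum_erase _ _ (Finset.mem_univ e), add_sub_cancel_left]
  exact Matrix.posSemidef_sum _ fun i _ => hP.1 i

theorem stmt8 {d : ℕ} (hd : 1 ≤ d) {E : Type*} [Fintype E]
    (P : E → Matrix (Fin d) (Fin d) ℂ)
    (hherm : ∀ e, (P e).IsHermitian) (hidem : ∀ e, P e * P e = P e)
    (hsum : ∑ e, P e = 1) :
    IsExtremalPOVM P := by
  refine mem_extremePoints_iff_left.2 ⟨⟨fun e => ?_, hsum⟩, ?_⟩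
  · have h := Matrix.posSemidef_conjTranspose_mul_self (P e)
    rwa [(hherm e).eq, hidem e] at h
  · rintro A hA B hB ⟨a, b, ha, hb, hab, hP⟩
    funext e
    have hPe : a • A e + b • B e = P e := congrFun hP e
    have h1 := posSemidef_mul_one_sub_eq_zero (hA.1 e) (hB.1 e) ha hb hPe (hidem e)
    have hcompl : a • (1 - A e) + b • (1 - B e) = 1 - P e := by
      rw [← hPe, smul_sub, smul_sub, sub_add_sub_comm, ← add_smul, hab, one_smul]
    have hidem' : (1 - P e) * (1 - P e) = 1 - P e := by
      rw [mul_sub, mul_one, sub_mul, one_mul, hidem e, sub_self, sub_zero]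
    have h2 := posSemidef_mul_one_sub_eq_zero (hA.posSemidef_one_sub e)
      (hB.posSemidef_one_sub e) ha hb hcompl hidem'
    rw [sub_sub_cancel, sub_mul, one_mul, sub_eq_zero] at h2
    rw [mul_sub, mul_one, sub_eq_zero] at h1
    rw [h1, ← h2]
end

section
/- Let P be a POVM with finite outcome set E on ℂ^d each of whose elements P_e has rank one. Then P is extremal if and only if the family of matrices {P_e}_{e∈E} is linearly independent over ℂ. -/
/-!
If `∑ c_e P_e = 0`, taking adjoints shows that the real and the imaginary parts of `c` satisfy
the same relation, so one may take `c` real. For small `ε > 0` the families `(1 ± ε c_e) P_e` are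
then POVMs with midpoint `P`, and extremality together with `P_e ≠ 0` forces `c = 0`.

Conversely, if `P = a Q + b R` with `a, b > 0` and POVMs `Q, R`, then `ker P_e ⊆ ker Q_e` by
positivity, and since `P_e` has rank one and `Q_e` is Hermitian, `Q_e` is a multiple of `P_e`
(`eq_smul_of_rank_one`). As `∑ Q_e = ∑ P_e`, linear independence makes all the factors equal to
`1`, that is, `Q = P`.
-/

open Matrix
open scoped ComplexOrder

/-- A positive semidefinite matrix of rank one spans an extreme ray of the positive semidefinite
cone. -/
lemma eq_smul_of_rank_one {d : ℕ} {A Q R : Matrix (Fin d) (Fin d) ℂ} {a b : ℝ}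
    (hA : A.PosSemidef) (hQ : Q.PosSemidef) (hR : R.PosSemidef) (ha : 0 < a) (hb : 0 < b)
    (hrank : A.rank = 1) (h : a • Q + b • R = A) : ∃ c : ℂ, Q = c • A := by
  have hker : ∀ x : Fin d → ℂ, A *ᵥ x = 0 → Q *ᵥ x = 0 := by
    intro x hx
    rw [← hQ.dotProduct_mulVec_zero_iff]
    have h1 := hQ.dotProduct_mulVec_nonneg x
    have h2 := hR.dotProduct_mulVec_nonneg x
    have h3 : a • (star x ⬝ᵥ Q *ᵥ x) + b • (star x ⬝ᵥ R *ᵥ x) = 0 := by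
      rw [← dotProduct_smul, ← dotProduct_smul, ← dotProduct_add, ← smul_mulVec, ← smul_mulVec,
        ← add_mulVec, h, hx, dotProduct_zero]
    have h4 := (add_eq_zero_iff_of_nonneg (smul_nonneg ha.le h1) (smul_nonneg hb.le h2)).1 h3
    exact (smul_eq_zero.1 h4.1).resolve_left ha.ne'
  obtain ⟨⟨v, x₀, hx₀⟩, hv, hspan⟩ := finrank_eq_one_iff'.1 (show
    Module.finrank ℂ (LinearMap.range A.mulVecLin) = 1 from hrank)
  rw [mulVecLin_apply] at hx₀
  have hv0 : v ≠ 0 := fun h0 => hv (Subtype.ext h0)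
  have hA0 : star x₀ ⬝ᵥ A *ᵥ x₀ ≠ 0 := by
    rw [Ne, hA.dotProduct_mulVec_zero_iff, hx₀]
    exact hv0
  -- Modulo `ker A`, every vector `y` is a multiple of `x₀`.
  have ht : ∀ y, ∃ t : ℂ, A *ᵥ y = t • A *ᵥ x₀ := by
    intro y
    obtain ⟨t, ht⟩ := hspan ⟨A *ᵥ y, y, rfl⟩
    exact ⟨t, by rw [hx₀]; exact (congrArg Subtype.val ht).symm⟩
  choose t htA using ht
  have htQ : ∀ y, Q *ᵥ y = t y • Q *ᵥ x₀ := by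
    intro y
    have := hker (y - t y • x₀) (by rw [mulVec_sub, mulVec_smul, htA y, sub_self])
    rwa [mulVec_sub, mulVec_smul, sub_eq_zero] at this
  -- Hence either form is determined by its value at `x₀`.
  have key : ∀ M : Matrix (Fin d) (Fin d) ℂ, M.IsHermitian → (∀ y, M *ᵥ y = t y • M *ᵥ x₀) →
      ∀ x y, star x ⬝ᵥ M *ᵥ y = t y * star (t x) * (star x₀ ⬝ᵥ M *ᵥ x₀) := by
    intro M hM hMt x y
    have e : ∀ z w : Fin d → ℂ, star z ⬝ᵥ M *ᵥ w = star (M *ᵥ z) ⬝ᵥ w := by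
      intro z w
      rw [star_mulVec, hM.eq, dotProduct_mulVec]
    rw [hMt y, dotProduct_smul, e x x₀, hMt x, star_smul, smul_dotProduct, ← e x₀ x₀]
    simp only [smul_eq_mul]
    ring
  refine ⟨(star x₀ ⬝ᵥ Q *ᵥ x₀) / (star x₀ ⬝ᵥ A *ᵥ x₀), ?_⟩
  ext i j
  have e : ∀ M : Matrix (Fin d) (Fin d) ℂ,
      M i j = star (Pi.single i 1 : Fin d → ℂ) ⬝ᵥ M *ᵥ Pi.single j 1 := by
    intro M
    simp
  rw [Matrix.smul_apply, e Q, e A, key Q hQ.isHermitian htQ (Pi.single i 1),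
    key A hA.isHermitian htA (Pi.single i 1) (Pi.single j 1), smul_eq_mul]
  field_simp

lemma IsPOVM.rescale {d : ℕ} {E : Type*} [Fintype E] {P : E → Matrix (Fin d) (Fin d) ℂ}
    (hP : IsPOVM P) (r : E → ℝ) (hr : ∀ e, -1 ≤ r e) (hsum : ∑ e, r e • P e = 0) :
    IsPOVM (fun e => (1 + r e) • P e) := by
  refine ⟨fun e => (hP.1 e).smul (by linarith [hr e]), ?_⟩
  simp only [add_smul, one_smul, Finset.sum_add_distrib, hsum, hP.2, add_zero]

lemma IsExtremalPOVM.real_coeff_eq_zero {d : ℕ} {E : Type*} [Fintype E]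
    {P : E → Matrix (Fin d) (Fin d) ℂ} (hP : IsPOVM P) (hne : ∀ e, P e ≠ 0)
    (hext : IsExtremalPOVM P) (r : E → ℝ) (hsum : ∑ e, r e • P e = 0) (e : E) : r e = 0 := by
  set S : ℝ := 1 + ∑ e, |r e| with hS
  have hSpos : 0 < S := by positivity
  have hle : ∀ e, |S⁻¹ * r e| ≤ 1 := by
    intro e
    have h1 : |r e| ≤ ∑ e, |r e| :=
      Finset.single_le_sum (fun i _ => abs_nonneg (r i)) (Finset.mem_univ e)
    rw [abs_mul, abs_of_pos (inv_pos.2 hSpos), inv_mul_le_iff₀ hSpos]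
    linarith
  have hsum' : ∑ e, (S⁻¹ * r e) • P e = 0 := by
    simp only [mul_smul, ← Finset.smul_sum, hsum, smul_zero]
  have hplus := hP.rescale (fun e => S⁻¹ * r e) (fun e => (abs_le.1 (hle e)).1) hsum'
  have hminus := hP.rescale (fun e => -(S⁻¹ * r e)) (fun e => by linarith [(abs_le.1 (hle e)).2])
    (by simp only [neg_smul, Finset.sum_neg_distrib, hsum', neg_zero])
  have heq := (mem_extremePoints_iff_left.1 hext).2 _ hplus _ hminus
    ⟨1 / 2, 1 / 2, by norm_num, by norm_num, by norm_num, by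
      funext e
      simp only [Pi.add_apply, Pi.smul_apply, smul_smul, ← add_smul]
      rw [show (1 / 2 * (1 + S⁻¹ * r e) + 1 / 2 * (1 + -(S⁻¹ * r e)) : ℝ) = 1 by ring, one_smul]⟩
  have he : (1 + S⁻¹ * r e) • P e = P e := congrFun heq e
  rw [add_smul, one_smul, add_eq_left, smul_eq_zero] at he
  exact (mul_eq_zero.1 (he.resolve_right (hne e))).resolve_left (inv_pos.2 hSpos).ne'

theorem stmt9 {d : ℕ} (hd : 1 ≤ d) {E : Type*} [Fintype E]
    (P : E → Matrix (Fin d) (Fin d) ℂ) (hP : IsPOVM P)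
    (hrank : ∀ e, (P e).rank = 1) :
    IsExtremalPOVM P ↔ LinearIndependent ℂ P := by
  have hne : ∀ e, P e ≠ 0 := by
    intro e h0
    have := hrank e
    simp [h0] at this
  rw [Fintype.linearIndependent_iff]
  constructor
  · intro hext c hc e
    have hc' : ∑ e, star (c e) • P e = 0 := by
      have := congrArg conjTranspose hc
      simpa only [conjTranspose_sum, conjTranspose_smul, fun e => (hP.1 e).isHermitian.eq,
        conjTranspose_zero] using this
    -- `c + star c = 2 Re c` and `I (star c - c) = 2 Im c` are real relations.
    have hre : ∑ e, (2 * (c e).re) • P e = 0 := by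
      rw [← add_zero (0 : Matrix (Fin d) (Fin d) ℂ)]
      nth_rewrite 1 [← hc]
      rw [← hc', ← Finset.sum_add_distrib]
      refine Finset.sum_congr rfl fun e _ => ?_
      rw [← add_smul, ← Complex.coe_smul]
      congr 1
      apply Complex.ext <;> simp [two_mul]
    have him : ∑ e, (2 * (c e).im) • P e = 0 := by
      have h0 : Complex.I • (∑ e, star (c e) • P e - ∑ e, c e • P e) = 0 := by
        rw [hc, hc', sub_zero, smul_zero]
      rw [← h0, ← Finset.sum_sub_distrib, Finset.smul_sum]
      refine Finset.sum_congr rfl fun e _ => ?_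
      rw [← sub_smul, smul_smul, ← Complex.coe_smul]
      congr 1
      apply Complex.ext <;> simp [two_mul]
    have h1 := hext.real_coeff_eq_zero hP hne _ hre e
    have h2 := hext.real_coeff_eq_zero hP hne _ him e
    apply Complex.ext
    · simpa using h1
    · simpa using h2
  · intro hli
    refine mem_extremePoints_iff_left.2 ⟨hP, ?_⟩
    rintro Q hQ R hR ⟨a, b, ha, hb, -, hab⟩
    have hex : ∀ e, ∃ c : ℂ, Q e = c • P e := fun e =>
      eq_smul_of_rank_one (hP.1 e) (hQ.1 e) (hR.1 e) ha hb (hrank e) (congrFun hab e)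
    choose c hc using hex
    have hsum : ∑ e, (c e - 1) • P e = 0 := by
      simp only [sub_smul, one_smul, Finset.sum_sub_distrib, ← hc, hP.2]
      rw [hQ.2, sub_self]
    funext e
    rw [hc e, sub_eq_zero.1 (hli _ hsum e), one_smul]
end

section
/- If P is an extremal POVM with finite outcome set E on ℂ^d, then its nonvanishing elements are linearly independent over ℂ: the family {P_e : e ∈ E, P_e ≠ 0} is linearly independent in M_d(ℂ). -/
/-!
A real linear relation `∑ r e • P e = 0` lets one perturb `P` to the families
`(1 ± t * r e) • P e`, which for small `t > 0` are POVMs with midpoint `P`; extremality forces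
`r e • P e = 0` for every `e` (`smul_eq_zero_of_real_relation`). Since the effects are Hermitian,
the real and imaginary parts of the coefficients of a complex relation both give real relations,
so a complex relation among the nonzero effects is trivial.
-/

open Matrix
open scoped ComplexOrder

lemma isPOVM_perturb {d : ℕ} {E : Type*} [Fintype E] {P : E → Matrix (Fin d) (Fin d) ℂ}
    (hP : IsPOVM P) {r : E → ℝ} (hr : ∑ e, r e • P e = 0) (hr1 : ∀ e, |r e| ≤ 1) :
    IsPOVM (fun e => (1 + r e) • P e) := by
  refine ⟨fun e => (hP.1 e).smul ?_, ?_⟩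
  · linarith [(abs_le.mp (hr1 e)).1]
  · simp only [add_smul, one_smul, Finset.sum_add_distrib, hr, add_zero, hP.2]

lemma smul_eq_zero_of_real_relation {d : ℕ} {E : Type*} [Fintype E]
    {P : E → Matrix (Fin d) (Fin d) ℂ} (hext : IsExtremalPOVM P)
    {r : E → ℝ} (hr : ∑ e, r e • P e = 0) (e : E) : r e • P e = 0 := by
  have hP : IsPOVM P := hext.1
  have hS : 0 ≤ ∑ e, |r e| := Finset.sum_nonneg fun _ _ => abs_nonneg _
  -- `t = (1 + ∑ |r e|)⁻¹` is a step size for which `|t * r e| ≤ 1` holds for all `e`.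
  obtain ⟨t, ht, htr⟩ : ∃ t : ℝ, 0 < t ∧ ∀ e, |t * r e| ≤ 1 := by
    refine ⟨(1 + ∑ e, |r e|)⁻¹, by positivity, fun e => ?_⟩
    have h := Finset.single_le_sum (f := fun e => |r e|) (fun _ _ => abs_nonneg _)
      (Finset.mem_univ e)
    rw [abs_mul, abs_of_pos (by positivity), inv_mul_le_iff₀ (by positivity)]
    linarith
  have hsum : ∑ e, (t * r e) • P e = 0 := by
    simp only [mul_smul, ← Finset.smul_sum, hr, smul_zero]
  have h1 := isPOVM_perturb hP hsum htr
  have h2 := isPOVM_perturb hP (r := fun e => -(t * r e))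
    (by simp only [neg_smul, Finset.sum_neg_distrib, hsum, neg_zero])
    (fun e => by rw [abs_neg]; exact htr e)
  have hmid : P ∈ openSegment ℝ (fun e => (1 + t * r e) • P e)
      (fun e => (1 + -(t * r e)) • P e) := by
    refine ⟨1 / 2, 1 / 2, by norm_num, by norm_num, by norm_num, ?_⟩
    funext e
    simp only [Pi.add_apply, Pi.smul_apply]
    module
  have h := congrFun (hext.2 h1 h2 hmid) e
  simp only [add_smul, one_smul, add_eq_left, mul_smul] at h
  exact (smul_eq_zero.mp h).resolve_left ht.ne'

theorem stmt11 {d : ℕ} (hd : 1 ≤ d) {E : Type*} [Fintype E]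
    (P : E → Matrix (Fin d) (Fin d) ℂ) (hP : IsPOVM P)
    (hext : IsExtremalPOVM P) :
    LinearIndependent ℂ (fun e : {e : E // P e ≠ 0} => P e.1) := by
  classical
  rw [Fintype.linearIndependent_iff]
  intro g hg e
  -- Extend the coefficients by zero to all outcomes.
  let c : E → ℂ := fun e => if h : P e ≠ 0 then g ⟨e, h⟩ else 0
  have hcg (e : {e : E // P e ≠ 0}) : c e.1 = g e := dif_pos e.2
  have hc : ∑ e, c e • P e = 0 := by
    rw [← hg, ← Fintype.sum_subtype_add_sum_subtype (fun e => P e ≠ 0) (fun e => c e • P e)]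
    rw [Finset.sum_eq_zero (s := (Finset.univ : Finset {e // ¬ P e ≠ 0}))
      (fun e _ => by rw [not_not.mp e.2, smul_zero]), add_zero]
    exact Finset.sum_congr rfl fun e _ => by rw [hcg]
  have hc' : ∑ e, star (c e) • P e = 0 := by
    have h := congrArg conjTranspose hc
    simpa only [conjTranspose_sum, conjTranspose_smul, conjTranspose_zero,
      (hP.1 _).isHermitian.eq] using h
  have hre : ∑ e, (c e).re • P e = 0 := by
    have h : ∑ e, (c e).re • P e
        = (1 / 2 : ℂ) • (∑ e, c e • P e + ∑ e, star (c e) • P e) := by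
      rw [← Finset.sum_add_distrib, Finset.smul_sum]
      refine Finset.sum_congr rfl fun e _ => ?_
      rw [← add_smul, smul_smul, ← Complex.coe_smul, Complex.re_eq_add_conj]
      congr 1
      simp only [starRingEnd_apply]
      ring
    rw [h, hc, hc', add_zero, smul_zero]
  have him : ∑ e, (c e).im • P e = 0 := by
    have h : ∑ e, (c e).im • P e
        = (1 / (2 * Complex.I)) • (∑ e, c e • P e - ∑ e, star (c e) • P e) := by
      rw [← Finset.sum_sub_distrib, Finset.smul_sum]
      refine Finset.sum_congr rfl fun e _ => ?_
      rw [← sub_smul, smul_smul, ← Complex.coe_smul, Complex.im_eq_sub_conj]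
      congr 1
      simp only [starRingEnd_apply]
      ring
    rw [h, hc, hc', sub_zero, smul_zero]
  rw [← hcg]
  exact Complex.ext
    ((smul_eq_zero.mp (smul_eq_zero_of_real_relation hext hre e.1)).resolve_right e.2)
    ((smul_eq_zero.mp (smul_eq_zero_of_real_relation hext him e.1)).resolve_right e.2)
end

section
/- Let P : Fin 3 → M_2(ℂ) be a POVM on ℂ² such that every element P_e has rank one and no two elements are proportional (for e ≠ f there is no scalar c ∈ ℂ with P_e = c · P_f). Then P is extremal. -/
/-!
If `P = a Q + b R` with POVMs `Q`, `R`, then `a Q_e ≤ P_e` and, since `P_e` has rank one,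
`Q_e` is a multiple of `P_e` (`proportional_of_add`).  As both families sum to the identity, this
gives a linear relation between the `P_e`, so it suffices that they are linearly independent.

For singular `2 × 2` matrices, `det (x A + y B) = x y det (A + B)`, and `det (A + B) ≠ 0` when
`A`, `B` are nonproportional and positive semidefinite: otherwise `A` and `B`, being dominated by
the singular matrix `A + B`, would both be multiples of it (`det_add_ne_zero`).  Taking
determinants in `∑ c_e P_e = 0` therefore gives `c_e c_f = 0` for all `e ≠ f`
(`mul_eq_zero_of_relation`), so the relation has at most one term and is trivial.
-/

open Matrix
open scoped ComplexOrder

/-- A positive semidefinite matrix dominated by a nonzero singular `2 × 2` matrix `S` is a multiple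
of `S`: it annihilates the kernel of `S`, which contains the columns of the adjugate of `S`. -/
lemma proportional_of_add {S Q R : Matrix (Fin 2) (Fin 2) ℂ} (hQ : Q.PosSemidef)
    (hR : R.PosSemidef) (hS : S = Q + R) (hdet : S.det = 0) (htr : S.trace ≠ 0) :
    Q = (Q.trace / S.trace) • S := by
  have hker : ∀ k : Fin 2 → ℂ, S *ᵥ k = 0 → Q *ᵥ k = 0 := by
    intro k hk
    rw [← hQ.dotProduct_mulVec_zero_iff]
    have h0 : star k ⬝ᵥ Q *ᵥ k + star k ⬝ᵥ R *ᵥ k = 0 := by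
      rw [← dotProduct_add, ← add_mulVec, ← hS, hk, dotProduct_zero]
    exact ((add_eq_zero_iff_of_nonneg (hQ.dotProduct_mulVec_nonneg k)
      (hR.dotProduct_mulVec_nonneg k)).1 h0).1
  have hSH : S.IsHermitian := hS ▸ (hQ.add hR).isHermitian
  rw [det_fin_two] at hdet
  have h1 := hker ![S 0 1, -S 0 0] (by
    ext i; fin_cases i
    · simp [mulVec, dotProduct, Fin.sum_univ_two]; ring
    · simp [mulVec, dotProduct, Fin.sum_univ_two]; linear_combination -hdet)
  have h2 := hker ![S 1 1, -S 1 0] (by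
    ext i; fin_cases i
    · simp [mulVec, dotProduct, Fin.sum_univ_two]; linear_combination hdet
    · simp [mulVec, dotProduct, Fin.sum_univ_two]; ring)
  have e1 := congrFun h1 0
  have e2 := congrFun h1 1
  have e3 := congrFun h2 0
  have e4 := congrFun h2 1
  simp only [mulVec, dotProduct, Fin.sum_univ_two, cons_val_zero, cons_val_one,
    Pi.zero_apply] at e1 e2 e3 e4
  have f1 := congrArg star e1
  have f2 := congrArg star e2
  have f4 := congrArg star e4
  simp only [star_add, star_mul', star_neg, hQ.isHermitian.apply, hSH.apply, star_zero] at f1 f2 f4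
  have key : S.trace • Q = Q.trace • S := by
    ext i j
    fin_cases i <;> fin_cases j <;>
      simp only [trace_fin_two, Matrix.smul_apply, smul_eq_mul, Fin.zero_eta, Fin.mk_one]
    · linear_combination e3 + f2
    · linear_combination f4 - e1
    · linear_combination e4 - f1
    · linear_combination -e3 - f2
  rw [div_eq_inv_mul, mul_smul, ← key, smul_smul, inv_mul_cancel₀ htr, one_smul]

lemma det_add_ne_zero {A B : Matrix (Fin 2) (Fin 2) ℂ} (hA : A.PosSemidef) (hB : B.PosSemidef)
    (hB0 : B ≠ 0) (h : ¬ ∃ c : ℂ, A = c • B) : (A + B).det ≠ 0 := by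
  intro hdet
  have htB : B.trace ≠ 0 := fun h0 => hB0 (hB.trace_eq_zero_iff.1 h0)
  have htr : (A + B).trace ≠ 0 := by
    rw [trace_add]
    intro h0
    exact htB ((add_eq_zero_iff_of_nonneg hA.trace_nonneg hB.trace_nonneg).1 h0).2
  have h1 := proportional_of_add hA hB rfl hdet htr
  have h2 := proportional_of_add hB hA (add_comm A B) hdet htr
  refine h ⟨A.trace / B.trace, ?_⟩
  rw [h2]
  nth_rw 1 [h1]
  rw [smul_smul, trace_smul, smul_eq_mul, div_mul_cancel₀ _ htr]
  congr 1
  field_simp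

lemma mul_eq_zero_of_relation {A B C : Matrix (Fin 2) (Fin 2) ℂ} (hA : A.det = 0) (hB : B.det = 0)
    (hC : C.det = 0) (hAB : (A + B).det ≠ 0) {x y z : ℂ} (h : x • A + y • B + z • C = 0) :
    x * y = 0 := by
  have hrel : x • A + y • B = (-z) • C := by
    rw [neg_smul]; exact eq_neg_of_add_eq_zero_left h
  have hd := congrArg det hrel
  rw [det_smul, hC, mul_zero] at hd
  refine (mul_eq_zero.1 (?_ : x * y * (A + B).det = 0)).resolve_right hAB
  simp only [det_fin_two, Matrix.add_apply, Matrix.smul_apply, smul_eq_mul] at *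
  linear_combination hd + (x * y - x ^ 2) * hA + (x * y - y ^ 2) * hB

theorem stmt13 (P : Fin 3 → Matrix (Fin 2) (Fin 2) ℂ) (hP : IsPOVM P)
    (hrank : ∀ e, (P e).rank = 1)
    (hprop : ∀ e f : Fin 3, e ≠ f → ¬ ∃ c : ℂ, P e = c • P f) :
    IsExtremalPOVM P := by
  have hdet : ∀ e, (P e).det = 0 := by
    intro e
    by_contra h
    have := rank_of_isUnit (P e) ((isUnit_iff_isUnit_det _).2 (isUnit_iff_ne_zero.2 h))
    simp [hrank e] at this
  have hne : ∀ e, P e ≠ 0 := by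
    intro e h
    have := hrank e
    simp [h] at this
  have htr : ∀ e, (P e).trace ≠ 0 := fun e h => hne e ((hP.1 e).trace_eq_zero_iff.1 h)
  have hadd : ∀ e f, e ≠ f → (P e + P f).det ≠ 0 := fun e f h =>
    det_add_ne_zero (hP.1 e) (hP.1 f) (hne f) (hprop e f h)
  have hind : ∀ c : Fin 3 → ℂ, ∑ e, c e • P e = 0 → ∀ e, c e = 0 := by
    intro c hc
    have hc' := hc
    rw [Fin.sum_univ_three] at hc
    have h01 : c 0 * c 1 = 0 :=
      mul_eq_zero_of_relation (hdet 0) (hdet 1) (hdet 2) (hadd 0 1 (by decide)) hc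
    have h02 : c 0 * c 2 = 0 :=
      mul_eq_zero_of_relation (hdet 0) (hdet 2) (hdet 1) (hadd 0 2 (by decide))
        (by rw [← hc]; abel)
    have h12 : c 1 * c 2 = 0 :=
      mul_eq_zero_of_relation (hdet 1) (hdet 2) (hdet 0) (hadd 1 2 (by decide))
        (by rw [← hc]; abel)
    intro e
    by_contra he
    have hother : ∀ f, f ≠ e → c f = 0 := by
      intro f hf
      fin_cases e <;> fin_cases f <;> simp_all
    rw [Finset.sum_eq_single e (fun f _ hf => by rw [hother f hf, zero_smul]) (by simp)] at hc'
    exact (smul_ne_zero he (hne e)) hc'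
  refine ⟨hP, ?_⟩
  rintro Q hQ R hR ⟨a, b, ha, hb, -, hab⟩
  have hQP : ∀ e, ∃ q : ℂ, Q e = q • P e := by
    intro e
    have h := proportional_of_add ((hQ.1 e).smul ha.le) ((hR.1 e).smul hb.le)
      (congrFun hab e).symm (hdet e) (htr e)
    refine ⟨a⁻¹ • ((a • Q e).trace / (P e).trace), ?_⟩
    rw [smul_assoc, ← h, smul_smul, inv_mul_cancel₀ ha.ne', one_smul]
  choose q hq using hQP
  have hzero := hind (fun e => q e - 1) (by
    simp only [sub_smul, one_smul, ← hq, Finset.sum_sub_distrib]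
    rw [hQ.2, hP.2, sub_self])
  ext1 e
  rw [hq e, sub_eq_zero.1 (hzero e), one_smul]
end

section
/- Let α : Fin 4 → ℝ satisfy α_e > 0 for all e and ∑_e α_e = 1, and let n : Fin 4 → ℝ³ be unit vectors with ∑_e α_e • n_e = 0. Define P_e = α_e • (I + n_e(1)σ₁ + n_e(2)σ₂ + n_e(3)σ₃) ∈ M_2(ℂ). Then P is a POVM on ℂ², and P is extremal if and only if the vectors n_0, n_1, n_2, n_3 span ℝ³ (i.e., they do not all lie in a common plane through the origin). -/
/-!
In Bloch coordinates a Hermitian `2 × 2` matrix is `t + q·σ` with `(t, q) ∈ ℝ × ℝ³`, and positive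
semidefiniteness says that `(t, q)` lies in the light cone `‖q‖ ≤ t`. The effects `P e` are
`α e • (1, n e)`, which span extreme rays of this cone. Hence in any decomposition of `P` as a
proper convex combination of POVMs, each component has effects `c e • (1, n e)`
(`cone_extreme_ray`), and `P` is extremal exactly when the four vectors `(1, n e)` of `ℝ⁴` are
linearly independent: a nonzero relation `∑ c e • (1, n e) = 0` gives the two POVMs with weights
`α ± ε c`, whose midpoint is `P`.

Finally, `c ↦ ∑ c e • (1, n e)` is an endomorphism between spaces of dimension four, so it is
injective iff it is surjective, and because `∑ α e • (1, n e) = (1, 0)`, it is surjective iff the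
`n e` span `ℝ³` (`lift_injective_iff`).
-/

open Matrix
open scoped ComplexOrder

/-- The Pauli matrix σ₁. -/
noncomputable def pauli1 : Matrix (Fin 2) (Fin 2) ℂ := !![0, 1; 1, 0]

/-- The Pauli matrix σ₂. -/
noncomputable def pauli2 : Matrix (Fin 2) (Fin 2) ℂ := !![0, -Complex.I; Complex.I, 0]

/-- The Pauli matrix σ₃. -/
noncomputable def pauli3 : Matrix (Fin 2) (Fin 2) ℂ := !![1, 0; 0, -1]

/-- The Bloch parametrization `(t, q) ↦ t I + q₁ σ₁ + q₂ σ₂ + q₃ σ₃` as a real-linear map. -/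
noncomputable def bloch : ℝ × (Fin 3 → ℝ) →ₗ[ℝ] Matrix (Fin 2) (Fin 2) ℂ where
  toFun p := (p.1 : ℂ) • 1 + (p.2 0 : ℂ) • pauli1 + (p.2 1 : ℂ) • pauli2 + (p.2 2 : ℂ) • pauli3
  map_add' p q := by
    simp only [Prod.fst_add, Prod.snd_add, Pi.add_apply, Complex.ofReal_add, add_smul]
    abel
  map_smul' r p := by
    ext i j
    simp [mul_assoc]

lemma bloch_eq (p : ℝ × (Fin 3 → ℝ)) :
    bloch p = !![(p.1 + p.2 2 : ℂ), p.2 0 - p.2 1 * Complex.I;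
      p.2 0 + p.2 1 * Complex.I, p.1 - p.2 2] := by
  ext i j
  fin_cases i <;> fin_cases j <;> simp [bloch, pauli1, pauli2, pauli3, sub_eq_add_neg]

lemma bloch_one : bloch (1, 0) = 1 := by
  simp [bloch]

lemma bloch_injective : Function.Injective bloch := by
  rw [← LinearMap.ker_eq_bot, LinearMap.ker_eq_bot']
  rintro ⟨t, q⟩ h
  rw [bloch_eq] at h
  have h00 := congrArg Complex.re (congrFun (congrFun h 0) 0)
  have h10 := congrFun (congrFun h 1) 0
  have h10r := congrArg Complex.re h10
  have h10i := congrArg Complex.im h10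
  have h11 := congrArg Complex.re (congrFun (congrFun h 1) 1)
  simp at h00 h10r h10i h11
  refine Prod.ext (by simp; linarith) (funext fun i => ?_)
  fin_cases i <;> simp <;> linarith

/-- A positive semidefinite matrix has Bloch coordinates in the light cone. -/
lemma exists_bloch_of_posSemidef {Q : Matrix (Fin 2) (Fin 2) ℂ} (hQ : Q.PosSemidef) :
    ∃ p : ℝ × (Fin 3 → ℝ), bloch p = Q ∧ 0 ≤ p.1 ∧ ∑ i, p.2 i ^ 2 ≤ p.1 ^ 2 := by
  let p : ℝ × (Fin 3 → ℝ) := (((Q 0 0).re + (Q 1 1).re) / 2,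
    ![(Q 1 0).re, (Q 1 0).im, ((Q 0 0).re - (Q 1 1).re) / 2])
  have h00 := hQ.isHermitian.apply 0 0
  have h01 := hQ.isHermitian.apply 0 1
  have h11 := hQ.isHermitian.apply 1 1
  have hp : bloch p = Q := by
    rw [bloch_eq]
    ext i j
    fin_cases i <;> fin_cases j <;> apply Complex.ext <;>
      simp [p, Complex.ext_iff] at h00 h01 h11 ⊢ <;> linarith
  refine ⟨p, hp, ?_, ?_⟩
  · have := (Complex.le_def.1 hQ.trace_nonneg).1
    rw [Matrix.trace_fin_two] at this
    simp at this
    simp only [p]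
    linarith
  · have := (Complex.le_def.1 hQ.det_nonneg).1
    rw [← hp, bloch_eq, Matrix.det_fin_two] at this
    simp at this
    rw [Fin.sum_univ_three]
    nlinarith

/-- For a unit vector `v` the matrix `R = I + v·σ` satisfies `R² = 2R`, so `R = Rᴴ R / 2`. -/
lemma bloch_posSemidef {t : ℝ} (ht : 0 ≤ t) {v : Fin 3 → ℝ} (hv : ∑ i, v i ^ 2 = 1) :
    (bloch (t • (1, v))).PosSemidef := by
  have key : bloch (t • (1, v)) = (t / 2 : ℝ) • ((bloch (1, v))ᴴ * bloch (1, v)) := by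
    rw [Fin.sum_univ_three] at hv
    rw [map_smul, div_eq_mul_inv, mul_smul]
    congr 1
    rw [bloch_eq]
    ext i j
    fin_cases i <;> fin_cases j <;> apply Complex.ext <;>
      simp [Matrix.mul_apply, Fin.sum_univ_two] <;> linarith
  rw [key]
  exact (Matrix.posSemidef_conjTranspose_mul_self _).smul (by positivity)

/-- The vectors `(1, v)` with `v` a unit vector span extreme rays of the light cone. -/
lemma cone_extreme_ray {a b t : ℝ} (ha : 0 < a) (hb : 0 < b) {v : Fin 3 → ℝ}
    (hv : ∑ i, v i ^ 2 = 1) {p q : ℝ × (Fin 3 → ℝ)}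
    (hp0 : 0 ≤ p.1) (hp : ∑ i, p.2 i ^ 2 ≤ p.1 ^ 2)
    (hq0 : 0 ≤ q.1) (hq : ∑ i, q.2 i ^ 2 ≤ q.1 ^ 2)
    (h : a • p + b • q = t • (1, v)) : p = p.1 • (1, v) := by
  -- Cauchy–Schwarz in the cone.
  have dot : ∀ r : ℝ × (Fin 3 → ℝ), 0 ≤ r.1 → ∑ i, r.2 i ^ 2 ≤ r.1 ^ 2 →
      ∑ i, r.2 i * v i ≤ r.1 := by
    intro r h0 hr
    refine le_of_sq_le_sq ?_ h0
    refine (Finset.sum_mul_sq_le_sq_mul_sq _ _ _).trans ?_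
    rwa [hv, mul_one]
  have hdp := dot p hp0 hp
  have hdq := dot q hq0 hq
  have h1 : a * p.1 + b * q.1 = t := by simpa using congrArg Prod.fst h
  have h2 : ∀ i, a * p.2 i + b * q.2 i = t * v i := fun i => by
    simpa using congrFun (congrArg Prod.snd h) i
  have h3 : a * ∑ i, p.2 i * v i + b * ∑ i, q.2 i * v i = t := by
    rw [Finset.mul_sum, Finset.mul_sum, ← Finset.sum_add_distrib, ← mul_one t, ← hv,
      Finset.mul_sum]
    refine Finset.sum_congr rfl fun i _ => ?_
    linear_combination v i * h2 i
  have hpv : ∑ i, p.2 i * v i = p.1 := by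
    refine le_antisymm hdp ?_
    have := mul_le_mul_of_nonneg_left hdq hb.le
    refine le_of_mul_le_mul_left ?_ ha
    linarith
  -- Equality holds in Cauchy–Schwarz, so `p.2 - p.1 • v` has norm zero.
  have h4 : ∑ i, (p.2 i - p.1 * v i) ^ 2 ≤ 0 := by
    have : ∑ i, (p.2 i - p.1 * v i) ^ 2 = ∑ i, p.2 i ^ 2 - 2 * p.1 * ∑ i, p.2 i * v i
        + p.1 ^ 2 * ∑ i, v i ^ 2 := by
      simp only [Fin.sum_univ_three]
      ring
    rw [this, hpv, hv]
    linarith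
  have h5 := (Finset.sum_eq_zero_iff_of_nonneg (fun i _ => sq_nonneg _)).1
    (h4.antisymm (Finset.sum_nonneg fun i _ => sq_nonneg _))
  refine Prod.ext (by simp) (funext fun i => ?_)
  have := pow_eq_zero_iff two_ne_zero |>.1 (h5 i (Finset.mem_univ i))
  simp
  linarith

/-- The linear map `c ↦ ∑ c e • (1, n e)` into Bloch coordinates. -/
noncomputable def lift (n : Fin 4 → Fin 3 → ℝ) : (Fin 4 → ℝ) →ₗ[ℝ] ℝ × (Fin 3 → ℝ) :=
  Fintype.linearCombination ℝ fun e => ((1 : ℝ), n e)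

lemma lift_apply (n : Fin 4 → Fin 3 → ℝ) (c : Fin 4 → ℝ) :
    lift n c = (∑ e, c e, ∑ e, c e • n e) := by
  simp [lift, Fintype.linearCombination_apply, Prod.ext_iff, Prod.fst_sum, Prod.snd_sum]

lemma bloch_lift (n : Fin 4 → Fin 3 → ℝ) (c : Fin 4 → ℝ) :
    bloch (lift n c) = ∑ e, bloch (c e • (1, n e)) := by
  rw [lift, Fintype.linearCombination_apply, map_sum]

lemma lift_injective_iff {n : Fin 4 → Fin 3 → ℝ} {α : Fin 4 → ℝ} (hα : lift n α = (1, 0)) :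
    Function.Injective (lift n) ↔ Submodule.span ℝ (Set.range n) = ⊤ := by
  rw [LinearMap.injective_iff_surjective_of_finrank_eq_finrank (by simp),
    ← Fintype.range_linearCombination ℝ, LinearMap.range_eq_top]
  constructor
  · intro h v
    obtain ⟨c, hc⟩ := h (0, v)
    exact ⟨c, by simpa [lift_apply, Fintype.linearCombination_apply] using congrArg Prod.snd hc⟩
  · rintro h ⟨s, v⟩
    obtain ⟨c, hc⟩ := h v
    refine ⟨c + (s - ∑ e, c e) • α, ?_⟩
    rw [map_add, map_smul, hα, lift_apply, ← Fintype.linearCombination_apply, hc]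
    simp

theorem stmt14 (α : Fin 4 → ℝ) (hα : ∀ e, 0 < α e) (hαsum : ∑ e, α e = 1)
    (n : Fin 4 → Fin 3 → ℝ) (hunit : ∀ e, ∑ i, n e i ^ 2 = 1)
    (hbal : ∑ e, α e • n e = 0)
    (P : Fin 4 → Matrix (Fin 2) (Fin 2) ℂ)
    (hPdef : ∀ e, P e = α e •
      (1 + (n e 0 : ℂ) • pauli1 + (n e 1 : ℂ) • pauli2 + (n e 2 : ℂ) • pauli3)) :
    IsPOVM P ∧ (IsExtremalPOVM P ↔ Submodule.span ℝ (Set.range n) = ⊤) := by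
  have hP : ∀ e, P e = bloch (α e • (1, n e)) := fun e => by
    rw [hPdef, map_smul]
    simp [bloch]
  have hlift : lift n α = (1, 0) := by rw [lift_apply, hαsum, hbal]
  have povm : ∀ c : Fin 4 → ℝ, (∀ e, 0 ≤ c e) → lift n c = (1, 0) →
      IsPOVM fun e => bloch (c e • (1, n e)) := fun c h0 hc =>
    ⟨fun e => bloch_posSemidef (h0 e) (hunit e), by rw [← bloch_lift, hc, bloch_one]⟩
  have hPOVM : IsPOVM P := by
    rw [funext hP]
    exact povm α (fun e => (hα e).le) hlift
  refine ⟨hPOVM, ?_⟩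
  rw [← lift_injective_iff hlift]
  constructor
  · intro hext
    rw [← LinearMap.ker_eq_bot, LinearMap.ker_eq_bot']
    intro c hc
    obtain ⟨ε, hε, hpos⟩ : ∃ ε : ℝ, 0 < ε ∧ ∀ e, 0 ≤ α e + ε * c e ∧ 0 ≤ α e - ε * c e := by
      have ev : ∀ᶠ ε : ℝ in nhds 0, ∀ e, 0 < α e + ε * c e ∧ 0 < α e - ε * c e := by
        rw [Filter.eventually_all]
        intro e
        refine Filter.Eventually.and ?_ ?_
        · exact ContinuousAt.eventually_lt (by fun_prop) (by fun_prop) (by simpa using hα e)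
        · exact ContinuousAt.eventually_lt (by fun_prop) (by fun_prop) (by simpa using hα e)
      obtain ⟨ε, h1, h2⟩ :=
        ((ev.filter_mono nhdsWithin_le_nhds).and (self_mem_nhdsWithin (s := Set.Ioi 0))).exists
      exact ⟨ε, h2, fun e => ⟨(h1 e).1.le, (h1 e).2.le⟩⟩
    have hplus := povm (α + ε • c) (fun e => (hpos e).1) (by simp [hlift, hc])
    have hminus := povm (α - ε • c) (fun e => (hpos e).2) (by simp [hlift, hc])
    have heq := (mem_extremePoints.1 hext).2 _ hplus _ hminus
      ⟨1 / 2, 1 / 2, by norm_num, by norm_num, by norm_num, by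
        funext e
        simp only [Pi.add_apply, Pi.smul_apply, Pi.sub_apply, hP, ← map_smul, ← map_add]
        congr 1
        rw [smul_smul, smul_smul, ← add_smul]
        congr 1
        ring⟩
    funext e
    have h1 := congrArg Prod.fst (bloch_injective ((congrFun heq.1 e).trans (hP e)))
    simpa [hε.ne'] using h1
  · intro hinj
    refine mem_extremePoints_iff_left.2 ⟨hPOVM, ?_⟩
    rintro Q hQ Q' hQ' ⟨a, b, ha, hb, -, hab⟩
    choose p hpQ hp0 hp using fun e => exists_bloch_of_posSemidef (hQ.1 e)
    choose q hqQ hq0 hq using fun e => exists_bloch_of_posSemidef (hQ'.1 e)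
    have hray : ∀ e, p e = (p e).1 • (1, n e) := fun e =>
      cone_extreme_ray ha hb (hunit e) (hp0 e) (hp e) (hq0 e) (hq e) (t := α e) <| by
        apply bloch_injective
        rw [map_add, map_smul bloch a, map_smul bloch b, hpQ, hqQ, ← hP, ← hab]
        rfl
    have hw : (fun e => (p e).1) = α := by
      apply hinj
      apply bloch_injective
      rw [hlift, bloch_one, bloch_lift, ← hQ.2]
      exact Finset.sum_congr rfl fun e _ => by rw [← hray, hpQ]
    funext e
    rw [← hpQ, hP, hray e, congrFun hw e]
end

section
/- Let d ≥ 1, ω = exp(2πi/d), Z|j⟩ = |j⊕1⟩, W|j⟩ = ω^j|j⟩, and U_{pq} = Z^p W^q for p, q ∈ ℤ_d. For any matrix ν ∈ M_d(ℂ), the d² matrices {U_{pq} ν U_{pq}^† : p, q ∈ ℤ_d} span M_d(ℂ) over ℂ if and only if Tr(U_{rs}^† ν) ≠ 0 for all r, s ∈ ℤ_d. -/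
/-!
Write `χ` for the standard additive character of `ℤ_d`, so that `U_{pq}` has entries
`χ (q j)` at `(j + p, j)`. Conjugation by `U_{pq}` multiplies the functional
`A ↦ Tr (U_{rs}^† A)` by the phase `χ (q r - s p)` (`trace_conj`). Hence, if
`Tr (U_{rs}^† ν) = 0`, this functional vanishes on the whole span but not at `U_{rs}`, and the
span is proper. Conversely, Fourier inversion on `ℤ_d × ℤ_d` gives
`∑_{p,q} χ (s p - q r) U_{pq} ν U_{pq}^† = d Tr (U_{rs}^† ν) U_{rs}` (`sum_conj`), so that
nonzero coefficients put every `U_{rs}` in the span, and the `U_{rs}` span all matrices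
(`sum_shiftMult`).
-/

open Matrix
open scoped ComplexOrder

/-- The cyclic shift matrix `Z` on `ℂ^d`: `Z|j⟩ = |j ⊕ 1⟩` (addition mod `d`). -/
noncomputable def shiftMat (d : ℕ) [NeZero d] : Matrix (ZMod d) (ZMod d) ℂ :=
  Matrix.of fun i j : ZMod d => if i = j + 1 then (1 : ℂ) else 0

/-- The phase multiplication matrix `W` on `ℂ^d`: `W|j⟩ = ω^j |j⟩` with `ω = exp(2πi/d)`. -/
noncomputable def multMat (d : ℕ) [NeZero d] : Matrix (ZMod d) (ZMod d) ℂ :=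
  Matrix.diagonal fun j : ZMod d => Complex.exp (2 * Real.pi * Complex.I / d) ^ j.val

/-- The shift-and-multiply unitaries `U_{pq} = Z^p W^q`. -/
noncomputable def shiftMult (d : ℕ) [NeZero d] (p q : ZMod d) : Matrix (ZMod d) (ZMod d) ℂ :=
  shiftMat d ^ p.val * multMat d ^ q.val

/-- Powers of `ω = exp (2πi/d)` with exponents in `ℤ_d`. -/
local notation "χ" => ZMod.stdAddChar

theorem exp_pow_val (d : ℕ) [NeZero d] (j : ZMod d) :
    Complex.exp (2 * Real.pi * Complex.I / d) ^ j.val = χ j := by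
  conv_rhs => rw [← ZMod.natCast_zmod_val j]
  have h := ZMod.stdAddChar_coe (N := d) (j.val : ℤ)
  push_cast at h
  rw [h, ← Complex.exp_nat_mul]
  congr 1
  ring

theorem shiftMat_pow_apply (d : ℕ) [NeZero d] (n : ℕ) (i j : ZMod d) :
    (shiftMat d ^ n) i j = if i = j + n then 1 else 0 := by
  induction n generalizing i j with
  | zero => simp [Matrix.one_apply]
  | succ n ih =>
    have h : ∀ k, shiftMat d k j = if k = j + 1 then 1 else 0 := fun k => rfl
    rw [pow_succ, Matrix.mul_apply]
    simp only [ih, h, mul_ite, mul_one, mul_zero, Finset.sum_ite_eq', Finset.mem_univ, if_true]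
    push_cast
    rw [add_assoc, add_comm (1 : ZMod d)]

theorem shiftMult_apply (d : ℕ) [NeZero d] (p q i j : ZMod d) :
    shiftMult d p q i j = if i = j + p then χ (q * j) else 0 := by
  have h : χ (q * j) = χ j ^ q.val := by
    rw [← AddChar.map_nsmul_eq_pow, nsmul_eq_mul, ZMod.natCast_zmod_val]
  rw [shiftMult, multMat, Matrix.diagonal_pow, Matrix.mul_diagonal, shiftMat_pow_apply, h,
    ZMod.natCast_zmod_val]
  simp [exp_pow_val]

theorem trace_mul_apply (d : ℕ) [NeZero d] (r s : ZMod d) (A : Matrix (ZMod d) (ZMod d) ℂ) :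
    ((shiftMult d r s)ᴴ * A).trace = ∑ j, χ (-(s * j)) * A (j + r) j := by
  simp only [Matrix.trace, Matrix.diag, Matrix.mul_apply, Matrix.conjTranspose_apply,
    shiftMult_apply, AddChar.map_neg_eq_conj]
  refine Finset.sum_congr rfl fun j _ => ?_
  rw [Finset.sum_eq_single (j + r)]
  · simp
  · intro b _ hb
    simp [hb]
  · simp

theorem conj_apply (d : ℕ) [NeZero d] (p q i j : ZMod d) (ν : Matrix (ZMod d) (ZMod d) ℂ) :
    (shiftMult d p q * ν * (shiftMult d p q)ᴴ) i j
      = χ (q * (i - j)) * ν (i - p) (j - p) := by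
  have e : q * (i - j) = q * (i - p) + -(q * (j - p)) := by ring
  rw [Matrix.mul_apply, Finset.sum_eq_single (j - p)]
  · rw [Matrix.mul_apply, Finset.sum_eq_single (i - p)]
    · rw [Matrix.conjTranspose_apply, shiftMult_apply, shiftMult_apply, e, AddChar.map_add_eq_mul,
        AddChar.map_neg_eq_conj]
      simp
      ring
    · intro b _ hb
      rw [shiftMult_apply, if_neg (fun h => hb (by rw [h]; ring)), zero_mul]
    · simp
  · intro b _ hb
    rw [Matrix.conjTranspose_apply, shiftMult_apply, if_neg (fun h => hb (by rw [h]; ring)),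
      star_zero, mul_zero]
  · simp

/-- The functional `A ↦ Tr (U_{rs}^† A)` is an eigenvector of conjugation by `U_{pq}`. -/
theorem trace_conj (d : ℕ) [NeZero d] (r s p q : ZMod d) (ν : Matrix (ZMod d) (ZMod d) ℂ) :
    ((shiftMult d r s)ᴴ * (shiftMult d p q * ν * (shiftMult d p q)ᴴ)).trace
      = χ (q * r - s * p) * ((shiftMult d r s)ᴴ * ν).trace := by
  rw [trace_mul_apply, trace_mul_apply, Finset.mul_sum]
  refine Fintype.sum_equiv (Equiv.subRight p) _ _ fun j => ?_
  rw [conj_apply, Equiv.subRight_apply, ← mul_assoc, ← mul_assoc, ← AddChar.map_add_eq_mul,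
    ← AddChar.map_add_eq_mul]
  congr 2 <;> ring_nf

theorem sum_char (d : ℕ) [NeZero d] (b : ZMod d) :
    ∑ x : ZMod d, χ (x * b) = if b = 0 then (d : ℂ) else 0 := by
  have h := AddChar.sum_mulShift b (ZMod.isPrimitive_stdAddChar d)
  rw [ZMod.card] at h
  rw [h]
  split_ifs <;> simp

/-- Fourier inversion: averaging the conjugates of `ν` against a character isolates the
component of `ν` along `U_{rs}`. -/
theorem sum_conj (d : ℕ) [NeZero d] (r s : ZMod d) (ν : Matrix (ZMod d) (ZMod d) ℂ) :
    ∑ p, ∑ q, χ (s * p - q * r) • (shiftMult d p q * ν * (shiftMult d p q)ᴴ)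
      = ((d : ℂ) * ((shiftMult d r s)ᴴ * ν).trace) • shiftMult d r s := by
  ext i j
  have h1 : ∀ p q : ZMod d, χ (s * p - q * r) * (χ (q * (i - j)) * ν (i - p) (j - p))
      = χ (q * (i - j - r)) * (χ (s * p) * ν (i - p) (j - p)) := by
    intro p q
    rw [← mul_assoc, ← mul_assoc, ← AddChar.map_add_eq_mul, ← AddChar.map_add_eq_mul]
    congr 2
    ring
  simp only [Matrix.sum_apply, Matrix.smul_apply, smul_eq_mul, conj_apply, h1]
  simp only [← Finset.sum_mul, ← Finset.mul_sum, sum_char, shiftMult_apply, trace_mul_apply]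
  by_cases h : i = j + r
  · subst h
    rw [if_pos (by ring), if_pos rfl, mul_assoc, Finset.sum_mul]
    congr 1
    refine Fintype.sum_equiv (Equiv.subLeft j) _ _ fun p => ?_
    rw [Equiv.subLeft_apply, mul_right_comm, ← AddChar.map_add_eq_mul]
    congr 2 <;> ring
  · rw [if_neg h, if_neg, zero_mul, mul_zero]
    intro h'
    exact h (by linear_combination h')

theorem sum_shiftMult (d : ℕ) [NeZero d] (i j : ZMod d) :
    ∑ s, χ (-(s * j)) • shiftMult d (i - j) s = (d : ℂ) • Matrix.single i j (1 : ℂ) := by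
  ext a b
  simp only [Matrix.sum_apply, Matrix.smul_apply, smul_eq_mul, shiftMult_apply, mul_ite, mul_zero,
    Matrix.single_apply]
  by_cases h : a = b + (i - j)
  · simp only [if_pos h, ← AddChar.map_add_eq_mul]
    have e : ∀ s : ZMod d, -(s * j) + s * b = s * (b - j) := fun s => by ring
    simp only [e, sum_char]
    by_cases hb : b = j
    · subst hb
      rw [if_pos (by ring), if_pos ⟨by rw [h]; ring, rfl⟩, mul_one]
    · rw [if_neg (sub_ne_zero.2 hb), if_neg (fun h' => hb h'.2.symm)]
  · simp only [if_neg h, Finset.sum_const_zero]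
    rw [if_neg]
    rintro ⟨rfl, rfl⟩
    exact h (by ring)

theorem stmt17 (d : ℕ) [NeZero d] (ν : Matrix (ZMod d) (ZMod d) ℂ) :
    Submodule.span ℂ (Set.range fun pq : ZMod d × ZMod d =>
        shiftMult d pq.1 pq.2 * ν * (shiftMult d pq.1 pq.2)ᴴ) = ⊤ ↔
      ∀ r s : ZMod d, ((shiftMult d r s)ᴴ * ν).trace ≠ 0 := by
  have hd : (d : ℂ) ≠ 0 := Nat.cast_ne_zero.2 (NeZero.ne d)
  constructor
  · intro hspan r s h0
    let f : Matrix (ZMod d) (ZMod d) ℂ →ₗ[ℂ] ℂ :=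
      Matrix.traceLinearMap (ZMod d) ℂ ℂ ∘ₗ LinearMap.mulLeft ℂ (shiftMult d r s)ᴴ
    have hf : ∀ A, f A = ((shiftMult d r s)ᴴ * A).trace := fun A => rfl
    have hle : Submodule.span ℂ (Set.range fun pq : ZMod d × ZMod d =>
        shiftMult d pq.1 pq.2 * ν * (shiftMult d pq.1 pq.2)ᴴ) ≤ LinearMap.ker f := by
      rw [Submodule.span_le]
      rintro _ ⟨⟨p, q⟩, rfl⟩
      rw [SetLike.mem_coe, LinearMap.mem_ker, hf, trace_conj, h0, mul_zero]
    have hU : shiftMult d r s ∈ LinearMap.ker f := hle (hspan ▸ Submodule.mem_top)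
    rw [LinearMap.mem_ker, hf, trace_mul_apply] at hU
    simp only [shiftMult_apply, if_true, ← AddChar.map_add_eq_mul, neg_add_cancel,
      AddChar.map_zero_eq_one] at hU
    simp [hd] at hU
  · intro h
    rw [eq_top_iff]
    set S := Submodule.span ℂ (Set.range fun pq : ZMod d × ZMod d =>
        shiftMult d pq.1 pq.2 * ν * (shiftMult d pq.1 pq.2)ᴴ) with hS
    have hU : ∀ r s, shiftMult d r s ∈ S := by
      intro r s
      rw [← Submodule.smul_mem_iff S (mul_ne_zero hd (h r s)), ← sum_conj]
      exact Submodule.sum_mem _ fun p _ => Submodule.sum_mem _ fun q _ =>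
        Submodule.smul_mem _ _ (Submodule.subset_span ⟨(p, q), rfl⟩)
    have hE : ∀ i j, Matrix.single i j (1 : ℂ) ∈ S := by
      intro i j
      rw [← Submodule.smul_mem_iff S hd, ← sum_shiftMult]
      exact Submodule.sum_mem _ fun s _ => Submodule.smul_mem _ _ (hU _ _)
    intro A _
    rw [Matrix.matrix_eq_sum_single A]
    refine Submodule.sum_mem _ fun i _ => Submodule.sum_mem _ fun j _ => ?_
    have e : Matrix.single i j (A i j) = A i j • Matrix.single i j (1 : ℂ) := by
      rw [Matrix.smul_single, smul_eq_mul, mul_one]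
    rw [e]
    exact Submodule.smul_mem _ _ (hE i j)
end

section
/- Let P be a POVM with finite outcome set E, |E| = N, on ℂ^d. For each e ∈ E let Z_e be the orthogonal projection onto range(P_e) and let M_e = {A ∈ M_d(ℂ) : Z_e A Z_e = A}. Let b(P) denote the real dimension of the perturbation space V(P) = {D : E → M_d(ℂ) : each D_e is Hermitian, Z_e D_e Z_e = D_e for all e, and ∑_{e∈E} D_e = 0}. Then b(P) = ∑_{e∈E} (rank P_e)² − dim_ℂ(∑_{e∈E} M_e), and P belongs to the frontier of the set of POVMs relative to the affine subspace H of Hermitian families summing to I if and only if b(P) < d²(N − 1). -/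
/-!
The perturbation space `V` is a real form of the complex space `K` of families `D` with
`D e ∈ cornerSpace (Z e)` and `∑ e, D e = 0`: every element of `K` is uniquely `A + i B` with
`A, B ∈ V`, so `dim_ℝ V = dim_ℂ K` (`finrank_pertSpace_eq`). The space `K` is the kernel of the
summation map on `∏ e, cornerSpace (Z e)`, whose range is the sum of the corner spaces, and
`cornerSpace (Z e)` is isomorphic to the endomorphism algebra of the range of `Z e`. Rank-nullity
gives the dimension formula (`finrank_pertSpace_add`).

For the second claim, a POVM is an interior point relative to the Hermitian families exactly when
none of its elements is singular. If all are positive definite, compactness of the unit sphere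
makes positivity stable under small perturbations; moreover all `Z e` are the identity and the
formula gives dimension `d² (N - 1)`. If `P e *ᵥ x = 0` with `x ≠ 0`, then some other outcome `f`
exists, and moving `P` along the direction `-x xᴴ` at `e` and `+x xᴴ` at `f` leaves the set of POVMs
immediately. The same direction lies in the perturbation space of the constant family `1` but not in
that of `Z`, which makes the dimension strictly smaller.
-/

open Matrix
open scoped ComplexOrder

/-- The set of families of Hermitian matrices summing to the identity. -/
def HermFamilies (d : ℕ) (E : Type*) [Fintype E] : Set (E → Matrix (Fin d) (Fin d) ℂ) :=
  {F | (∀ e, (F e).IsHermitian) ∧ ∑ e, F e = 1}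

/-- The "corner" space `M = {A : Z A Z = A}` of a projection `Z`, as a complex subspace
of `M_d(ℂ)`. -/
noncomputable def cornerSpace {d : ℕ} (Z : Matrix (Fin d) (Fin d) ℂ) :
    Submodule ℂ (Matrix (Fin d) (Fin d) ℂ) where
  carrier := {A | Z * A * Z = A}
  add_mem' := by
    intro a b ha hb
    simp only [Set.mem_setOf_eq] at *
    rw [mul_add, add_mul, ha, hb]
  zero_mem' := by simp
  smul_mem' := by
    intro c a ha
    simp only [Set.mem_setOf_eq] at *
    rw [mul_smul_comm, smul_mul_assoc, ha]

/-- The real vector space of perturbations of a POVM whose elements are supported on the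
subspaces determined by the projections `Z e`: families of Hermitian matrices `D e`
with `Z e * D e * Z e = D e` and `∑ e, D e = 0`. -/
noncomputable def pertSpace {d : ℕ} {E : Type*} [Fintype E] (Z : E → Matrix (Fin d) (Fin d) ℂ) :
    Submodule ℝ (E → Matrix (Fin d) (Fin d) ℂ) where
  carrier := {D | (∀ e, (D e).IsHermitian) ∧ (∀ e, Z e * D e * Z e = D e) ∧ ∑ e, D e = 0}
  add_mem' := by
    rintro a b ⟨ha1, ha2, ha3⟩ ⟨hb1, hb2, hb3⟩
    refine ⟨fun e => (ha1 e).add (hb1 e), fun e => ?_, ?_⟩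
    · rw [Pi.add_apply, mul_add, add_mul, ha2 e, hb2 e]
    · simp only [Pi.add_apply]
      rw [Finset.sum_add_distrib, ha3, hb3, add_zero]
  zero_mem' := by
    refine ⟨fun e => ?_, fun e => by simp, by simp⟩
    simp [Matrix.IsHermitian]
  smul_mem' := by
    rintro c a ⟨ha1, ha2, ha3⟩
    refine ⟨fun e => ?_, fun e => ?_, ?_⟩
    · show ((c • a) e)ᴴ = (c • a) e
      rw [Pi.smul_apply, Matrix.conjTranspose_smul, star_trivial, ha1 e]
    · rw [Pi.smul_apply, mul_smul_comm, smul_mul_assoc, ha2 e]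
    · simp only [Pi.smul_apply]
      rw [← Finset.smul_sum, ha3, smul_zero]

/-! ### The dimension of the corner spaces -/

section Corner

variable {d : ℕ}

/-- Extension of an endomorphism of the range of `Z` to a matrix, by composing with `Z` on the
right and with the inclusion of the range on the left. -/
noncomputable def cornerEmb (Z : Matrix (Fin d) (Fin d) ℂ) :
    (LinearMap.range Z.mulVecLin →ₗ[ℂ] LinearMap.range Z.mulVecLin) →ₗ[ℂ]
      Matrix (Fin d) (Fin d) ℂ where
  toFun f := LinearMap.toMatrix'
    ((LinearMap.range Z.mulVecLin).subtype ∘ₗ f ∘ₗ Z.mulVecLin.rangeRestrict)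
  map_add' f g := by
    rw [← map_add]
    congr 1
  map_smul' c f := by
    rw [RingHom.id_apply, ← map_smul]
    congr 1

lemma cornerEmb_mulVec (Z : Matrix (Fin d) (Fin d) ℂ)
    (f : LinearMap.range Z.mulVecLin →ₗ[ℂ] LinearMap.range Z.mulVecLin) (v : Fin d → ℂ) :
    cornerEmb Z f *ᵥ v = f (Z.mulVecLin.rangeRestrict v) := by
  simp only [cornerEmb, LinearMap.coe_mk, AddHom.coe_mk]
  rw [← Matrix.toLin'_apply, Matrix.toLin'_toMatrix']
  rfl

lemma cornerEmb_injective (Z : Matrix (Fin d) (Fin d) ℂ) :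
    Function.Injective (cornerEmb Z) := by
  intro f g h
  ext1 y
  obtain ⟨v, rfl⟩ := Z.mulVecLin.surjective_rangeRestrict y
  apply Subtype.ext
  rw [← cornerEmb_mulVec, ← cornerEmb_mulVec, h]

lemma range_cornerEmb (Z : Matrix (Fin d) (Fin d) ℂ) (hZ : Z * Z = Z) :
    LinearMap.range (cornerEmb Z) = cornerSpace Z := by
  have hfix : ∀ y : LinearMap.range Z.mulVecLin, Z *ᵥ (y : Fin d → ℂ) = y := by
    rintro ⟨_, v, rfl⟩
    simp [hZ]
  apply le_antisymm
  · rintro _ ⟨f, rfl⟩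
    show Z * cornerEmb Z f * Z = cornerEmb Z f
    refine Matrix.ext_of_mulVec_single fun i => ?_
    rw [← Matrix.mulVec_mulVec, ← Matrix.mulVec_mulVec, cornerEmb_mulVec, cornerEmb_mulVec, hfix]
    congr 2
    apply Subtype.ext
    show Z *ᵥ (Z *ᵥ _) = Z *ᵥ _
    rw [Matrix.mulVec_mulVec, hZ]
  · intro A hA
    have hA' : Z * A * Z = A := hA
    refine ⟨Z.mulVecLin.rangeRestrict ∘ₗ A.mulVecLin ∘ₗ (LinearMap.range Z.mulVecLin).subtype, ?_⟩
    refine Matrix.ext_of_mulVec_single fun i => ?_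
    rw [cornerEmb_mulVec]
    conv_rhs => rw [← hA']
    show Z *ᵥ (A *ᵥ (Z *ᵥ _)) = _
    simp only [Matrix.mulVec_mulVec, Matrix.mul_assoc]

lemma finrank_cornerSpace (Z : Matrix (Fin d) (Fin d) ℂ) (hZ : Z * Z = Z) :
    Module.finrank ℂ (cornerSpace Z) = Z.rank ^ 2 := by
  rw [← range_cornerEmb Z hZ, LinearMap.finrank_range_of_inj (cornerEmb_injective Z),
    Module.finrank_linearMap, sq, Matrix.rank]

end Corner

/-! ### The dimension of the perturbation space -/

section Perturbation

variable {d : ℕ} {E : Type*} [Fintype E]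

/-- The summation map `(A e)_e ↦ ∑ e, A e` on the product of the corner spaces. -/
noncomputable def cornerSum (Z : E → Matrix (Fin d) (Fin d) ℂ) :
    ((e : E) → cornerSpace (Z e)) →ₗ[ℂ] Matrix (Fin d) (Fin d) ℂ :=
  ∑ e, (cornerSpace (Z e)).subtype ∘ₗ LinearMap.proj e

lemma cornerSum_apply (Z : E → Matrix (Fin d) (Fin d) ℂ) (D : (e : E) → cornerSpace (Z e)) :
    cornerSum Z D = ∑ e, (D e : Matrix (Fin d) (Fin d) ℂ) := by
  simp [cornerSum]

lemma range_cornerSum (Z : E → Matrix (Fin d) (Fin d) ℂ) :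
    LinearMap.range (cornerSum Z) = ⨆ e, cornerSpace (Z e) := by
  classical
  apply le_antisymm
  · rintro _ ⟨D, rfl⟩
    rw [cornerSum_apply]
    exact Submodule.sum_mem _ fun e _ => (le_iSup (fun e => cornerSpace (Z e)) e) (D e).2
  · refine iSup_le fun e A hA => ⟨Pi.single e ⟨A, hA⟩, ?_⟩
    rw [cornerSum_apply, Finset.sum_eq_single e]
    · simp
    · intro f _ hf
      simp [Pi.single_eq_of_ne hf]
    · simp

/-- The map `(A, B) ↦ A + i B` from pairs of perturbations to the complex kernel of the summation
map; it exhibits the perturbation space as a real form of that kernel. -/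
noncomputable def pertToKer (Z : E → Matrix (Fin d) (Fin d) ℂ) :
    (pertSpace Z × pertSpace Z) →ₗ[ℝ] LinearMap.ker (cornerSum Z) where
  toFun D := ⟨fun e => ⟨D.1.1 e + Complex.I • D.2.1 e,
      (cornerSpace (Z e)).add_mem (D.1.2.2.1 e)
        ((cornerSpace (Z e)).smul_mem _ (D.2.2.2.1 e))⟩, by
    rw [LinearMap.mem_ker, cornerSum_apply]
    simp only
    rw [Finset.sum_add_distrib, ← Finset.smul_sum, D.1.2.2.2, D.2.2.2.2, smul_zero, add_zero]⟩
  map_add' D D' := by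
    apply Subtype.ext
    funext e
    apply Subtype.ext
    simp only [Prod.fst_add, Prod.snd_add, Submodule.coe_add, Pi.add_apply, smul_add]
    abel
  map_smul' c D := by
    apply Subtype.ext
    funext e
    apply Subtype.ext
    simp only [Prod.smul_fst, Prod.smul_snd, RingHom.id_apply]
    show c • D.1.1 e + Complex.I • (c • D.2.1 e) = c • (D.1.1 e + Complex.I • D.2.1 e)
    rw [smul_add, smul_comm c Complex.I]

lemma pertToKer_injective (Z : E → Matrix (Fin d) (Fin d) ℂ) :
    Function.Injective (pertToKer Z) := by
  rw [injective_iff_map_eq_zero]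
  rintro ⟨A, B⟩ h
  have h1 : ∀ e, A.1 e + Complex.I • B.1 e = 0 := fun e =>
    congrArg Subtype.val (congrFun (congrArg Subtype.val h) e)
  -- Taking adjoints changes the sign of the imaginary part.
  have h2 : ∀ e, A.1 e - Complex.I • B.1 e = 0 := fun e => by
    have := congrArg Matrix.conjTranspose (h1 e)
    rw [Matrix.conjTranspose_add, Matrix.conjTranspose_smul, (A.2.1 e).eq, (B.2.1 e).eq] at this
    simpa [sub_eq_add_neg] using this
  have hA : ∀ e, A.1 e = 0 := fun e => by
    have h3 : (2 : ℂ) • A.1 e = 0 := by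
      calc (2 : ℂ) • A.1 e
          = (A.1 e + Complex.I • B.1 e) + (A.1 e - Complex.I • B.1 e) := by module
        _ = 0 := by rw [h1 e, h2 e, add_zero]
    simpa using h3
  have hB : ∀ e, B.1 e = 0 := fun e => by
    have h3 := h1 e
    rw [hA e, zero_add] at h3
    simpa using h3
  ext1
  · exact Subtype.ext (funext hA)
  · exact Subtype.ext (funext hB)

lemma pertToKer_surjective (Z : E → Matrix (Fin d) (Fin d) ℂ) (hZ : ∀ e, (Z e).IsHermitian) :
    Function.Surjective (pertToKer Z) := by
  rintro ⟨D, hD⟩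
  have hsum : ∑ e, (D e : Matrix (Fin d) (Fin d) ℂ) = 0 := by
    rw [LinearMap.mem_ker, cornerSum_apply] at hD
    exact hD
  have hsum' : ∑ e, (D e : Matrix (Fin d) (Fin d) ℂ)ᴴ = 0 := by
    rw [← Matrix.conjTranspose_sum, hsum, Matrix.conjTranspose_zero]
  have hc : ∀ e, Z e * (D e).1 * Z e = (D e).1 := fun e => (D e).2
  have hc' : ∀ e, Z e * (D e).1ᴴ * Z e = (D e).1ᴴ := fun e => by
    have := congrArg Matrix.conjTranspose (hc e)
    rwa [Matrix.conjTranspose_mul, Matrix.conjTranspose_mul, (hZ e).eq, ← Matrix.mul_assoc] at this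
  refine ⟨(⟨fun e => (1 / 2 : ℂ) • ((D e).1 + (D e).1ᴴ), ?_, ?_, ?_⟩,
    ⟨fun e => (-Complex.I / 2) • ((D e).1 - (D e).1ᴴ), ?_, ?_, ?_⟩), ?_⟩
  · intro e
    simp only [Matrix.IsHermitian, Matrix.conjTranspose_smul, Matrix.conjTranspose_add,
      Matrix.conjTranspose_conjTranspose]
    rw [add_comm]
    simp
  · intro e
    simp only
    rw [mul_smul_comm, smul_mul_assoc, mul_add, add_mul, hc, hc']
  · rw [← Finset.smul_sum, Finset.sum_add_distrib, hsum, hsum', add_zero, smul_zero]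
  · intro e
    simp only [Matrix.IsHermitian, Matrix.conjTranspose_smul, Matrix.conjTranspose_sub,
      Matrix.conjTranspose_conjTranspose]
    rw [← neg_sub, smul_neg, ← neg_smul]
    congr 1
    simp [neg_div]
  · intro e
    simp only
    rw [mul_smul_comm, smul_mul_assoc, mul_sub, sub_mul, hc, hc']
  · rw [← Finset.smul_sum, Finset.sum_sub_distrib, hsum, hsum', sub_zero, smul_zero]
  · apply Subtype.ext
    funext e
    apply Subtype.ext
    show (1 / 2 : ℂ) • ((D e).1 + (D e).1ᴴ)
      + Complex.I • ((-Complex.I / 2) • ((D e).1 - (D e).1ᴴ)) = (D e).1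
    rw [smul_smul, show Complex.I * (-Complex.I / 2) = 1 / 2 by
      linear_combination (-1 / 2 : ℂ) * Complex.I_mul_I]
    module

lemma finrank_pertSpace_eq (Z : E → Matrix (Fin d) (Fin d) ℂ) (hZ : ∀ e, (Z e).IsHermitian) :
    Module.finrank ℝ (pertSpace Z) = Module.finrank ℂ (LinearMap.ker (cornerSum Z)) := by
  have h := (LinearEquiv.ofBijective (pertToKer Z)
    ⟨pertToKer_injective Z, pertToKer_surjective Z hZ⟩).finrank_eq
  have h2 : Module.finrank ℝ (LinearMap.ker (cornerSum Z))
      = 2 * Module.finrank ℂ (LinearMap.ker (cornerSum Z)) :=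
    finrank_real_of_complex (LinearMap.ker (cornerSum Z))
  rw [Module.finrank_prod] at h
  omega

/-- The dimension formula, in additive form. -/
lemma finrank_pertSpace_add (Z : E → Matrix (Fin d) (Fin d) ℂ) (hZ : ∀ e, (Z e).IsHermitian)
    (hZidem : ∀ e, Z e * Z e = Z e) :
    Module.finrank ℝ (pertSpace Z) + Module.finrank ℂ ↥(⨆ e, cornerSpace (Z e))
      = ∑ e, (Z e).rank ^ 2 := by
  have h := LinearMap.finrank_range_add_finrank_ker (cornerSum Z)
  rw [range_cornerSum, Module.finrank_pi_fintype] at h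
  rw [finrank_pertSpace_eq Z hZ, add_comm, h]
  exact Finset.sum_congr rfl fun e _ => finrank_cornerSpace (Z e) (hZidem e)

/-- When all supports are full, the perturbation space has dimension `d² (N - 1)`. -/
lemma finrank_pertSpace_one [Nonempty E] :
    Module.finrank ℝ (pertSpace (fun _ : E => (1 : Matrix (Fin d) (Fin d) ℂ)))
      = d ^ 2 * (Fintype.card E - 1) := by
  have h := finrank_pertSpace_add (fun _ : E => (1 : Matrix (Fin d) (Fin d) ℂ))
    (fun _ => Matrix.isHermitian_one) (fun _ => one_mul 1)
  have htop : cornerSpace (1 : Matrix (Fin d) (Fin d) ℂ) = ⊤ := by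
    rw [eq_top_iff]
    intro A _
    show 1 * A * 1 = A
    simp
  rw [ciSup_const, htop, finrank_top, Module.finrank_matrix] at h
  simp only [Matrix.rank_one, Fintype.card_fin, Finset.sum_const, Finset.card_univ, smul_eq_mul,
    Module.finrank_self, mul_one] at h
  rw [Nat.mul_sub, mul_one, mul_comm, ← h, sq]
  omega

end Perturbation

/-! ### Interior points of the set of POVMs -/

section Interior

variable {d : ℕ} {E : Type*} [Fintype E]

/-- Positive definiteness is stable under small Hermitian perturbations: the quadratic form is
positive on the compact unit sphere, hence it stays positive there nearby. -/
lemma eventually_posSemidef {A : Matrix (Fin d) (Fin d) ℂ} (hA : A.PosDef) :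
    ∀ᶠ B in nhds A, B.IsHermitian → B.PosSemidef := by
  have key : ∀ᶠ B in nhds A, ∀ x ∈ Metric.sphere (0 : Fin d → ℂ) 1,
      0 < (star x ⬝ᵥ (B *ᵥ x)).re := by
    refine (isCompact_sphere _ _).eventually_forall_of_forall_eventually fun x hx => ?_
    have hx0 : x ≠ 0 := by
      rintro rfl
      simp at hx
    have hcont : Continuous fun z : Matrix (Fin d) (Fin d) ℂ × (Fin d → ℂ) =>
        (star z.2 ⬝ᵥ (z.1 *ᵥ z.2)).re := by fun_prop
    refine hcont.continuousAt.eventually_const_lt ?_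
    exact (Complex.pos_iff.mp (hA.dotProduct_mulVec_pos hx0)).1
  filter_upwards [key] with B hB hherm
  refine Matrix.PosSemidef.of_dotProduct_mulVec_nonneg hherm fun x => ?_
  by_cases hx : x = 0
  · simp [hx]
  have hn : ‖x‖ ≠ 0 := norm_ne_zero_iff.mpr hx
  have hy := hB (‖x‖⁻¹ • x) (by simp [norm_smul, hn])
  have hre : 0 ≤ (star x ⬝ᵥ (B *ᵥ x)).re := by
    rw [star_smul, smul_dotProduct, Matrix.mulVec_smul, dotProduct_smul, Complex.smul_re,
      Complex.smul_re] at hy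
    simp only [star_trivial, smul_eq_mul, ← mul_assoc] at hy
    exact (pos_of_mul_pos_right hy (by positivity)).le
  exact Complex.nonneg_iff.mpr ⟨hre, (hherm.im_star_dotProduct_mulVec_self x).symm⟩

lemma mem_interior_of_posDef (P : HermFamilies d E) (hP : ∀ e, (P.1 e).PosDef) :
    P ∈ interior {Q : HermFamilies d E | IsPOVM (Q : E → Matrix (Fin d) (Fin d) ℂ)} := by
  rw [mem_interior_iff_mem_nhds]
  have h : ∀ᶠ Q : HermFamilies d E in nhds P, ∀ e, (Q.1 e).IsHermitian → (Q.1 e).PosSemidef := by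
    rw [Filter.eventually_all]
    intro e
    have hc : Continuous fun Q : HermFamilies d E => Q.1 e :=
      (continuous_apply e).comp continuous_subtype_val
    exact hc.continuousAt.eventually (eventually_posSemidef (hP e))
  filter_upwards [h] with Q hQ
  exact ⟨fun e => hQ e (Q.2.1 e), Q.2.2⟩

/-- The direction with `-X` at `e`, `X` at `f`, and zero elsewhere. -/
noncomputable def exchange {E : Type*} [DecidableEq E] (e f : E) (X : Matrix (Fin d) (Fin d) ℂ) :
    E → Matrix (Fin d) (Fin d) ℂ :=
  Pi.single f X - Pi.single e X

lemma exchange_self {E : Type*} [DecidableEq E] {e f : E} (hef : f ≠ e) (X : Matrix (Fin d) (Fin d) ℂ) :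
    exchange e f X e = -X := by
  simp [exchange, hef.symm]

lemma exchange_mem [DecidableEq E] (e f : E) {X : Matrix (Fin d) (Fin d) ℂ}
    (hX : X.IsHermitian) : exchange e f X ∈ pertSpace (fun _ : E => (1 : Matrix _ _ ℂ)) := by
  have hs : ∀ g h : E, ((Pi.single g X : E → Matrix (Fin d) (Fin d) ℂ) h).IsHermitian := by
    intro g h
    by_cases hgh : h = g
    · subst hgh
      simpa using hX
    · simp [Pi.single_eq_of_ne hgh]
  refine ⟨fun g => (hs f g).sub (hs e g), fun g => by simp, ?_⟩
  simp [exchange, Finset.sum_sub_distrib]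

lemma not_mem_interior (P : HermFamilies d E) {e f : E} (hef : f ≠ e) {x : Fin d → ℂ}
    (hx : x ≠ 0) (hPx : P.1 e *ᵥ x = 0) :
    P ∉ interior {Q : HermFamilies d E | IsPOVM (Q : E → Matrix (Fin d) (Fin d) ℂ)} := by
  classical
  intro hint
  set X : Matrix (Fin d) (Fin d) ℂ := Matrix.vecMulVec x (star x) with hX
  have hXh : X.IsHermitian := (Matrix.posSemidef_vecMulVec_self_star x).isHermitian
  have hD := exchange_mem e f hXh
  let γ : ℝ → HermFamilies d E := fun t => ⟨P.1 + t • exchange e f X, by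
    obtain ⟨h1, -, h3⟩ := (pertSpace (fun _ : E => (1 : Matrix (Fin d) (Fin d) ℂ))).smul_mem t hD
    refine ⟨fun g => (P.2.1 g).add (h1 g), ?_⟩
    simp only [Pi.add_apply]
    rw [Finset.sum_add_distrib, P.2.2, h3, add_zero]⟩
  have hγ : Continuous γ := Continuous.subtype_mk (by fun_prop) _
  have hγ0 : γ 0 = P := Subtype.ext (by simp [γ])
  have hev : ∀ᶠ t : ℝ in nhds 0, IsPOVM (γ t).1 := by
    have : Filter.Tendsto γ (nhds 0) (nhds P) := by
      have := hγ.tendsto 0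
      rwa [hγ0] at this
    exact this.eventually (mem_interior_iff_mem_nhds.mp hint)
  obtain ⟨t, ht, ht0⟩ := ((hev.filter_mono nhdsWithin_le_nhds).and
    (self_mem_nhdsWithin : Set.Ioi (0 : ℝ) ∈ nhdsWithin 0 (Set.Ioi 0))).exists
  have h1 := (Complex.nonneg_iff.mp ((ht.1 e).dotProduct_mulVec_nonneg x)).1
  have hxx : 0 < star x ⬝ᵥ x := dotProduct_star_self_pos_iff.mpr hx
  have h2 : star x ⬝ᵥ ((γ t).1 e *ᵥ x) = -((t : ℂ) * ((star x ⬝ᵥ x) * (star x ⬝ᵥ x))) := by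
    have : (γ t).1 e = P.1 e - t • X := by
      show P.1 e + t • exchange e f X e = _
      rw [exchange_self hef, smul_neg, sub_eq_add_neg]
    rw [this, Matrix.sub_mulVec, hPx, zero_sub, dotProduct_neg, Matrix.smul_mulVec,
      dotProduct_smul, hX, Matrix.vecMulVec_mulVec]
    simp
  have h3 : 0 < (t : ℂ) * ((star x ⬝ᵥ x) * (star x ⬝ᵥ x)) :=
    mul_pos (by simpa using ht0) (mul_pos hxx hxx)
  rw [h2, Complex.neg_re] at h1
  linarith [(Complex.pos_iff.mp h3).1]

end Interior

theorem stmt19 {d N : ℕ} (hd : 1 ≤ d) {E : Type*} [Fintype E]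
    (hN : Fintype.card E = N)
    (P : E → Matrix (Fin d) (Fin d) ℂ) (hP : IsPOVM P)
    (Z : E → Matrix (Fin d) (Fin d) ℂ)
    (hZherm : ∀ e, (Z e).IsHermitian) (hZidem : ∀ e, Z e * Z e = Z e)
    (hZrange : ∀ e, LinearMap.range (Z e).mulVecLin = LinearMap.range (P e).mulVecLin)
    (hPH : P ∈ HermFamilies d E) :
    Module.finrank ℝ ↥(pertSpace Z) =
      (∑ e, (P e).rank ^ 2) - Module.finrank ℂ ↥(⨆ e, cornerSpace (Z e)) ∧
    ((⟨P, hPH⟩ : HermFamilies d E) ∈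
        frontier {Q : HermFamilies d E | IsPOVM (Q : E → Matrix (Fin d) (Fin d) ℂ)} ↔
      Module.finrank ℝ ↥(pertSpace Z) < d ^ 2 * (N - 1)) := by
  classical
  constructor
  · have h := finrank_pertSpace_add Z hZherm hZidem
    have hr : ∀ e, (Z e).rank = (P e).rank := fun e => by
      rw [Matrix.rank, Matrix.rank, hZrange e]
    simp only [hr] at h
    omega
  have : Nonempty (Fin d) := ⟨⟨0, hd⟩⟩
  have hE : Nonempty E := by
    by_contra hcon
    rw [not_nonempty_iff] at hcon
    have := hP.2
    simp at this
  subst hN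
  rw [frontier, Set.mem_sdiff]
  have hcl : (⟨P, hPH⟩ : HermFamilies d E) ∈
      closure {Q : HermFamilies d E | IsPOVM (Q : E → Matrix (Fin d) (Fin d) ℂ)} :=
    subset_closure hP
  by_cases hpd : ∀ e, (P e).PosDef
  · have hZ1 : Z = fun _ => 1 := by
      funext e
      have hsurj : LinearMap.range (Z e).mulVecLin = ⊤ := by
        rw [hZrange, LinearMap.range_eq_top]
        exact Matrix.mulVec_surjective_iff_isUnit.mpr (hpd e).isUnit
      have hu : IsUnit (Z e) :=
        Matrix.mulVec_surjective_iff_isUnit.mp (LinearMap.range_eq_top.mp hsurj)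
      exact hu.mul_left_cancel (by rw [hZidem, mul_one])
    have hint := mem_interior_of_posDef ⟨P, hPH⟩ hpd
    rw [hZ1, finrank_pertSpace_one]
    simp [hint]
  · push Not at hpd
    obtain ⟨e, he⟩ := hpd
    rw [(hP.1 e).posDef_iff_isUnit, Matrix.isUnit_iff_isUnit_det, isUnit_iff_ne_zero,
      not_not] at he
    obtain ⟨x, hx, hPx⟩ := Matrix.exists_mulVec_eq_zero_iff.mpr he
    -- A single-outcome POVM is the identity, which is not singular.
    obtain ⟨f, hef⟩ : ∃ f, f ≠ e := by
      by_contra hcon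
      push Not at hcon
      have h1 := hP.2
      rw [Finset.sum_eq_single e (fun b _ hb => absurd (hcon b) hb) (by simp)] at h1
      rw [h1, Matrix.one_mulVec] at hPx
      exact hx hPx
    have hnint := not_mem_interior ⟨P, hPH⟩ hef hx hPx
    refine iff_of_true ⟨hcl, hnint⟩ ?_
    rw [← finrank_pertSpace_one]
    apply Submodule.finrank_lt_finrank_of_lt
    refine lt_of_le_of_ne (fun D hD => ⟨hD.1, fun e => by simp, hD.2.2⟩) fun heq => ?_
    have hXh : (Matrix.vecMulVec x (star x)).IsHermitian :=
      (Matrix.posSemidef_vecMulVec_self_star x).isHermitian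
    have hD := exchange_mem e f hXh
    rw [← heq] at hD
    have h1 := hD.2.1 e
    rw [exchange_self hef] at h1
    -- The kernel of `P e` is orthogonal to its range, which is the range of `Z e`.
    have hZx : Z e *ᵥ x = 0 := by
      obtain ⟨w, hw⟩ : Z e *ᵥ x ∈ LinearMap.range (P e).mulVecLin := by
        rw [← hZrange]
        exact ⟨x, rfl⟩
      have hw' : P e *ᵥ w = Z e *ᵥ x := hw
      have hself : star (Z e *ᵥ x) ⬝ᵥ (Z e *ᵥ x) = 0 := by
        rw [Matrix.star_mulVec, (hZherm e).eq, ← Matrix.dotProduct_mulVec, Matrix.mulVec_mulVec,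
          hZidem, ← hw', Matrix.dotProduct_mulVec]
        nth_rewrite 1 [← (hPH.1 e).eq]
        rw [← Matrix.star_mulVec, hPx, star_zero, zero_dotProduct]
      exact dotProduct_star_self_eq_zero.mp hself
    have h2 : Z e * -Matrix.vecMulVec x (star x) * Z e = 0 := by
      rw [mul_neg, Matrix.mul_vecMulVec, hZx]
      simp
    rw [h2] at h1
    have h3 : Matrix.vecMulVec x (star x) *ᵥ x = 0 := by
      rw [← neg_neg (Matrix.vecMulVec x (star x)), ← h1]
      simp
    rw [Matrix.vecMulVec_mulVec] at h3
    have h4 := dotProduct_star_self_pos_iff.mpr hx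
    simp_all
end
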